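/- arXiv:1608.00710 — 3 statements merged into one kernel-verified Lean document; each statement's English description precedes it below -/
import Mathlib

section
/- Let X_1, …, X_n be random variables in a sub-linear expectation space with ℰ[X_k] ≤ 0 for each k, which are upper extended negatively dependent under the conjugate expectation ℰ with dominating constant K ≥ 1 (i.e., ℰ[∏_{i=1}^n g_i(X_i)] ≤ K·∏_{i=1}^n ℰ[g_i(X_i)] for all non-negative bounded Lipschitz non-decreasing g_i). Set S_n = Σ_{k=1}^n X_k and B_n = Σ_{k=1}^n 𝔼[X_k²]. Then: (a) for all x, y > 0, 𝓋(S_n ≥ x) ≤ 𝕍(max_{k≤n} X_k ≥ y) + K·exp{ −x²/(2(xy + B_n)) · (1 + (2/3)·ln(1 + xy/B_n)) }; and (c) for all x > 0, 𝓋(S_n ≥ x) ≤ (1 + K·e)·B_n/x². -/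
open Filter MeasureTheory
open scoped ENNReal NNReal

noncomputable section

/-- A sub-linear expectation on `Ω`: a monotone, constant-preserving, sub-additive,
positively homogeneous functional on real random variables (with values in the
extended reals, so that random variables without a finite expectation are allowed). -/
structure SublinearExp (Ω : Type) where
  E : (Ω → ℝ) → EReal
  mono : ∀ X Y : Ω → ℝ, (∀ ω, X ω ≤ Y ω) → E X ≤ E Y
  const_eq : ∀ c : ℝ, E (fun _ => c) = (c : EReal)
  subadd : ∀ X Y : Ω → ℝ, E (fun ω => X ω + Y ω) ≤ E X + E Y
  pos_homog : ∀ lam : ℝ, 0 ≤ lam → ∀ X : Ω → ℝ,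
    E (fun ω => lam * X ω) = (lam : EReal) * E X

namespace SublinearExp

variable {Ω : Type}

/-- The conjugate expectation `ℰ[X] := −𝔼[−X]`. -/
def cE (SL : SublinearExp Ω) (X : Ω → ℝ) : EReal := - SL.E fun ω => - X ω

/-- The upper capacity `𝕍(A) := inf{𝔼[ξ] : 1_A ≤ ξ}`. -/
def V (SL : SublinearExp Ω) (A : Set Ω) : ℝ :=
  sInf {x : ℝ | ∃ ξ : Ω → ℝ,
    (∀ ω, A.indicator (fun _ => (1 : ℝ)) ω ≤ ξ ω) ∧ SL.E ξ = (x : EReal)}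

/-- The lower capacity `𝓋(A) := 1 − 𝕍(Aᶜ)`. -/
def vLow (SL : SublinearExp Ω) (A : Set Ω) : ℝ := 1 - SL.V Aᶜ

/-- The Choquet integral `C_𝕍(X) := ∫₀^∞ 𝕍(X ≥ t) dt` (of a non-negative r.v.). -/
def Choquet (SL : SublinearExp Ω) (X : Ω → ℝ) : ℝ≥0∞ :=
  ∫⁻ t in Set.Ioi (0 : ℝ), ENNReal.ofReal (SL.V {ω | t ≤ X ω})

/-- The outer capacity `𝕍*(A) := inf{Σ_n 𝕍(A_n) : A ⊆ ∪_n A_n}`. -/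
def Vout (SL : SublinearExp Ω) (A : Set Ω) : ℝ≥0∞ :=
  ⨅ (B : ℕ → Set Ω) (_ : A ⊆ ⋃ n, B n), ∑' n, ENNReal.ofReal (SL.V (B n))

/-- The upper capacity is continuous: continuous from below and from above. -/
def ContinuousCapacity (SL : SublinearExp Ω) : Prop :=
  (∀ A : ℕ → Set Ω, Monotone A →
    Tendsto (fun n => SL.V (A n)) atTop (nhds (SL.V (⋃ n, A n)))) ∧
  (∀ A : ℕ → Set Ω, Antitone A →
    Tendsto (fun n => SL.V (A n)) atTop (nhds (SL.V (⋂ n, A n))))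

/-- Bounded Lipschitz function on ℝ. -/
def IsBLip (g : ℝ → ℝ) : Prop :=
  (∃ L : NNReal, LipschitzWith L g) ∧ ∃ M : ℝ, ∀ x, |g x| ≤ M

/-- Local Lipschitz function on ℝ: `|φ(x) − φ(y)| ≤ C(1+|x|^m+|y|^m)|x−y|`. -/
def IsLocLip (φ : ℝ → ℝ) : Prop :=
  ∃ (C : ℝ) (m : ℕ), ∀ x y : ℝ, |φ x - φ y| ≤ C * (1 + |x| ^ m + |y| ^ m) * |x - y|

/-- Upper extended negative dependence (finite family) with dominating constant `K`:
`𝔼[∏ g_i(X_i)] ≤ K ∏ 𝔼[g_i(X_i)]` for all non-negative bounded Lipschitz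
non-decreasing `g_i`.  (Expectations of bounded functions are finite, whence
the `toReal`.) -/
def UENDFin (SL : SublinearExp Ω) (K : ℝ) {n : ℕ} (X : Fin n → Ω → ℝ) : Prop :=
  ∀ g : Fin n → ℝ → ℝ, (∀ i, IsBLip (g i)) → (∀ i, Monotone (g i)) →
    (∀ i x, 0 ≤ g i x) →
    SL.E (fun ω => ∏ i, g i (X i ω)) ≤
      ((K * ∏ i, (SL.E fun ω => g i (X i ω)).toReal : ℝ) : EReal)

/-- Upper extended negative dependence for a sequence. -/
def UEND (SL : SublinearExp Ω) (K : ℝ) (X : ℕ → Ω → ℝ) : Prop :=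
  ∀ n : ℕ, ∀ g : ℕ → ℝ → ℝ, (∀ i, IsBLip (g i)) → (∀ i, Monotone (g i)) →
    (∀ i x, 0 ≤ g i x) →
    SL.E (fun ω => ∏ i ∈ Finset.range n, g i (X i ω)) ≤
      ((K * ∏ i ∈ Finset.range n, (SL.E fun ω => g i (X i ω)).toReal : ℝ) : EReal)

/-- Lower extended negative dependence for a sequence. -/
def LEND (SL : SublinearExp Ω) (K : ℝ) (X : ℕ → Ω → ℝ) : Prop :=
  ∀ n : ℕ, ∀ g : ℕ → ℝ → ℝ, (∀ i, IsBLip (g i)) → (∀ i, Antitone (g i)) →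
    (∀ i x, 0 ≤ g i x) →
    SL.E (fun ω => ∏ i ∈ Finset.range n, g i (X i ω)) ≤
      ((K * ∏ i ∈ Finset.range n, (SL.E fun ω => g i (X i ω)).toReal : ℝ) : EReal)

/-- Extended negative dependence = upper and lower END. -/
def END (SL : SublinearExp Ω) (K : ℝ) (X : ℕ → Ω → ℝ) : Prop :=
  UEND SL K X ∧ LEND SL K X

/-- Upper extended negative dependence under the conjugate expectation `ℰ`
(finite family). -/
def UENDFinConj (SL : SublinearExp Ω) (K : ℝ) {n : ℕ} (X : Fin n → Ω → ℝ) : Prop :=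
  ∀ g : Fin n → ℝ → ℝ, (∀ i, IsBLip (g i)) → (∀ i, Monotone (g i)) →
    (∀ i x, 0 ≤ g i x) →
    SL.cE (fun ω => ∏ i, g i (X i ω)) ≤
      ((K * ∏ i, (SL.cE fun ω => g i (X i ω)).toReal : ℝ) : EReal)

/-- Upper extended negative dependence under the conjugate expectation (sequence). -/
def UENDconj (SL : SublinearExp Ω) (K : ℝ) (X : ℕ → Ω → ℝ) : Prop :=
  ∀ n : ℕ, ∀ g : ℕ → ℝ → ℝ, (∀ i, IsBLip (g i)) → (∀ i, Monotone (g i)) →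
    (∀ i x, 0 ≤ g i x) →
    SL.cE (fun ω => ∏ i ∈ Finset.range n, g i (X i ω)) ≤
      ((K * ∏ i ∈ Finset.range n, (SL.cE fun ω => g i (X i ω)).toReal : ℝ) : EReal)

/-- Lower extended negative dependence under the conjugate expectation (sequence). -/
def LENDconj (SL : SublinearExp Ω) (K : ℝ) (X : ℕ → Ω → ℝ) : Prop :=
  ∀ n : ℕ, ∀ g : ℕ → ℝ → ℝ, (∀ i, IsBLip (g i)) → (∀ i, Antitone (g i)) →
    (∀ i x, 0 ≤ g i x) →
    SL.cE (fun ω => ∏ i ∈ Finset.range n, g i (X i ω)) ≤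
      ((K * ∏ i ∈ Finset.range n, (SL.cE fun ω => g i (X i ω)).toReal : ℝ) : EReal)

/-- Extended negative dependence under the conjugate expectation. -/
def ENDconj (SL : SublinearExp Ω) (K : ℝ) (X : ℕ → Ω → ℝ) : Prop :=
  UENDconj SL K X ∧ LENDconj SL K X

/-- Extended independence of a sequence:
`𝔼[∏ ψ_i(X_i)] = ∏ 𝔼[ψ_i(X_i)]` for non-negative local Lipschitz `ψ_i`,
whenever the expectations involved are finite. -/
def ExtIndep (SL : SublinearExp Ω) (X : ℕ → Ω → ℝ) : Prop :=
  ∀ n : ℕ, ∀ ψ : ℕ → ℝ → ℝ, (∀ i, IsLocLip (ψ i)) → (∀ i x, 0 ≤ ψ i x) →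
    (∀ i ∈ Finset.range n, SL.E (fun ω => ψ i (X i ω)) ≠ ⊤) →
    SL.E (fun ω => ∏ i ∈ Finset.range n, ψ i (X i ω)) =
      ((∏ i ∈ Finset.range n, (SL.E fun ω => ψ i (X i ω)).toReal : ℝ) : EReal)

/-- Extended independence of two random variables. -/
def ExtIndepPair (SL : SublinearExp Ω) (Y Z : Ω → ℝ) : Prop :=
  ∀ ψ₁ ψ₂ : ℝ → ℝ, IsLocLip ψ₁ → IsLocLip ψ₂ →
    (∀ x, 0 ≤ ψ₁ x) → (∀ x, 0 ≤ ψ₂ x) →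
    SL.E (fun ω => ψ₁ (Y ω)) ≠ ⊤ → SL.E (fun ω => ψ₂ (Z ω)) ≠ ⊤ →
    SL.E (fun ω => ψ₁ (Y ω) * ψ₂ (Z ω)) =
      (((SL.E fun ω => ψ₁ (Y ω)).toReal * (SL.E fun ω => ψ₂ (Z ω)).toReal : ℝ) : EReal)

/-- Identically distributed: `𝔼[φ(X_i)] = 𝔼[φ(X_1)]` for all local Lipschitz `φ`. -/
def IdentDist (SL : SublinearExp Ω) (X : ℕ → Ω → ℝ) : Prop :=
  ∀ (i : ℕ) (φ : ℝ → ℝ), IsLocLip φ →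
    SL.E (fun ω => φ (X i ω)) = SL.E fun ω => φ (X 0 ω)

end SublinearExp

/-- `log x = ln(x ∨ e)`. -/
def paperLog (x : ℝ) : ℝ := Real.log (max x (Real.exp 1))

/-- `a_n = √(2 n log log n)` with the above convention for `log`. -/
def lilA (n : ℕ) : ℝ := Real.sqrt (2 * n * paperLog (paperLog n))

namespace Real

/-- A Padé-type lower bound for the logarithm, exact to third order at `0`. -/
lemma pade_le_log_one_add {u : ℝ} (hu : 0 ≤ u) :
    (9 * u ^ 2 + 6 * u) / (4 * u ^ 2 + 12 * u + 6) ≤ log (1 + u) := by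
  let h : ℝ → ℝ := fun u => log (1 + u) - (9 * u ^ 2 + 6 * u) / (4 * u ^ 2 + 12 * u + 6)
  have hderiv : ∀ v : ℝ, 0 ≤ v → HasDerivAt h
      (1 / (1 + v) - ((18 * v + 6) * (4 * v ^ 2 + 12 * v + 6) -
        (9 * v ^ 2 + 6 * v) * (8 * v + 12)) / (4 * v ^ 2 + 12 * v + 6) ^ 2) v := by
    intro v hv
    have h1 : HasDerivAt (fun u : ℝ => log (1 + u)) (1 / (1 + v)) v :=
      ((hasDerivAt_id v).const_add 1).log (by simp only [id]; positivity)
    have h2 : HasDerivAt (fun u : ℝ => 9 * u ^ 2 + 6 * u) (18 * v + 6) v := by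
      refine (((hasDerivAt_pow 2 v).const_mul 9).add
        ((hasDerivAt_id' v).const_mul 6)).congr_deriv ?_
      norm_num
      ring
    have h3 : HasDerivAt (fun u : ℝ => 4 * u ^ 2 + 12 * u + 6) (8 * v + 12) v := by
      refine ((((hasDerivAt_pow 2 v).const_mul 4).add
        ((hasDerivAt_id' v).const_mul 12)).add_const 6).congr_deriv ?_
      norm_num
      ring
    exact h1.sub (h2.div h3 (by positivity))
  have hmono : MonotoneOn h (Set.Ici 0) := by
    refine monotoneOn_of_deriv_nonneg (convex_Ici 0)
      (fun v hv => (hderiv v hv).continuousAt.continuousWithinAt)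
      (fun v hv => (hderiv v ?_).differentiableAt.differentiableWithinAt) (fun v hv => ?_)
    · exact interior_subset hv
    · have hv0 : 0 ≤ v := interior_subset hv
      rw [(hderiv v hv0).deriv, sub_nonneg, div_le_div_iff₀ (by positivity) (by positivity)]
      have : 0 ≤ 16 * v ^ 4 + 12 * v ^ 3 := by positivity
      nlinarith
  have := hmono (Set.mem_Ici.2 le_rfl) (Set.mem_Ici.2 hu) hu
  simp only [h] at this
  norm_num at this
  exact this

/-- A lower bound for Bennett's function. -/
lemma le_bennett {u : ℝ} (hu : 0 ≤ u) :
    u ^ 2 / (2 * (1 + u)) * (1 + 2 / 3 * log (1 + u)) ≤ (1 + u) * log (1 + u) - u := by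
  have h := pade_le_log_one_add hu
  rw [div_le_iff₀ (by positivity)] at h
  rw [div_mul_eq_mul_div, div_le_iff₀ (by positivity)]
  linarith

lemma exp_le_one_add_add_sq_of_nonpos {s : ℝ} (hs : s ≤ 0) : exp s ≤ 1 + s + s ^ 2 / 2 := by
  have h := quadratic_le_exp_of_nonneg (neg_nonneg.2 hs)
  have h1 : exp s * exp (-s) = 1 := by rw [← exp_add]; simp
  have h2 : 0 ≤ 1 + s + s ^ 2 / 2 := by nlinarith [sq_nonneg (s + 1)]
  have h3 : 1 ≤ (1 + s + s ^ 2 / 2) * exp (-s) := by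
    refine le_trans ?_ (mul_le_mul_of_nonneg_left h h2)
    nlinarith [sq_nonneg (s ^ 2)]
  exact le_of_mul_le_mul_right (h1.trans_le h3) (exp_pos _)

lemma hasSum_exp_sub_one_sub (s : ℝ) :
    HasSum (fun k : ℕ => s ^ (k + 2) / (k + 2).factorial) (exp s - 1 - s) := by
  have h : HasSum (fun k : ℕ => s ^ k / k.factorial) (exp s) := by
    rw [Real.exp_eq_exp_ℝ, NormedSpace.exp_eq_tsum_div]
    exact (Real.summable_pow_div_factorial s).hasSum
  rw [hasSum_nat_add_iff (f := fun k : ℕ => s ^ k / k.factorial) 2]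
  simpa [Finset.sum_range_succ, sub_sub] using h

/-- The function `s ↦ (exp s - 1 - s) / s ^ 2` is bounded on `(-∞, t]` by its value at `t`. -/
lemma exp_le_one_add_add_mul_sq {s t : ℝ} (ht : 0 < t) (hst : s ≤ t) :
    exp s ≤ 1 + s + (exp t - 1 - t) / t ^ 2 * s ^ 2 := by
  rcases le_total s 0 with hs | hs
  · have h1 := exp_le_one_add_add_sq_of_nonpos hs
    have h2 := quadratic_le_exp_of_nonneg ht.le
    have h3 : 1 / 2 ≤ (exp t - 1 - t) / t ^ 2 := by
      rw [le_div_iff₀ (by positivity)]; linarith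
    nlinarith [mul_le_mul_of_nonneg_right h3 (sq_nonneg s)]
  · have h := hasSum_le (fun k => ?_) (hasSum_exp_sub_one_sub s)
      ((hasSum_exp_sub_one_sub t).mul_left (s ^ 2 / t ^ 2))
    · have : s ^ 2 / t ^ 2 * (exp t - 1 - t) = (exp t - 1 - t) / t ^ 2 * s ^ 2 := by ring
      linarith
    · have hpow : s ^ k ≤ t ^ k := pow_le_pow_left₀ hs hst k
      have : s ^ 2 / t ^ 2 * (t ^ (k + 2) / (k + 2).factorial) =
          s ^ 2 * t ^ k / (k + 2).factorial := by
        rw [pow_add]; field_simp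
      rw [this, pow_add, mul_comm (s ^ k)]
      gcongr

end Real

namespace SublinearExp

variable {Ω : Type} (SL : SublinearExp Ω)

lemma E_nonneg {f : Ω → ℝ} (hf : ∀ ω, 0 ≤ f ω) : 0 ≤ SL.E f := by
  have h := SL.mono (fun _ => 0) f hf
  rwa [SL.const_eq, EReal.coe_zero] at h

lemma coe_toReal_E {f : Ω → ℝ} {a b : ℝ} (ha : ∀ ω, a ≤ f ω) (hb : ∀ ω, f ω ≤ b) :
    ((SL.E f).toReal : EReal) = SL.E f := by
  have h1 := SL.mono _ _ ha
  have h2 := SL.mono _ _ hb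
  rw [SL.const_eq] at h1 h2
  exact EReal.coe_toReal (ne_top_of_le_ne_top (EReal.coe_ne_top b) h2)
    (ne_bot_of_le_ne_bot (EReal.coe_ne_bot a) h1)

lemma V_bddBelow (A : Set Ω) : BddBelow {x : ℝ | ∃ ξ : Ω → ℝ,
    (∀ ω, A.indicator (fun _ => (1 : ℝ)) ω ≤ ξ ω) ∧ SL.E ξ = (x : EReal)} := by
  refine ⟨0, ?_⟩
  rintro r ⟨ξ, hξ, hr⟩
  have h : 0 ≤ SL.E ξ :=
    SL.E_nonneg fun ω => (Set.indicator_nonneg (fun _ _ => zero_le_one) ω).trans (hξ ω)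
  rw [hr] at h
  exact_mod_cast h

lemma V_nonempty (A : Set Ω) : {x : ℝ | ∃ ξ : Ω → ℝ,
    (∀ ω, A.indicator (fun _ => (1 : ℝ)) ω ≤ ξ ω) ∧ SL.E ξ = (x : EReal)}.Nonempty :=
  ⟨1, fun _ => 1, fun ω => Set.indicator_le_self' (fun _ _ => zero_le_one) ω, SL.const_eq 1⟩

lemma V_le {A : Set Ω} {ξ : Ω → ℝ} (hξ : ∀ ω, A.indicator (fun _ => (1 : ℝ)) ω ≤ ξ ω)
    {r : ℝ} (hr : SL.E ξ ≤ r) : SL.V A ≤ r := by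
  have h : 0 ≤ SL.E ξ :=
    SL.E_nonneg fun ω => (Set.indicator_nonneg (fun _ _ => zero_le_one) ω).trans (hξ ω)
  have hE : ((SL.E ξ).toReal : EReal) = SL.E ξ :=
    EReal.coe_toReal (ne_top_of_le_ne_top (EReal.coe_ne_top r) hr)
      (ne_bot_of_le_ne_bot EReal.zero_ne_bot h)
  rw [← hE] at hr
  exact (csInf_le (SL.V_bddBelow A) ⟨ξ, hξ, hE.symm⟩).trans (by exact_mod_cast hr)

/-- A Markov-type bound: if `1_A ≤ 1_D + Z`, then `𝓋(A) ≤ 𝕍(D) + ℰ[Z]`. -/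
lemma vLow_le_add {A D : Set Ω} {Z : Ω → ℝ} (hZ : ∀ ω, 0 ≤ Z ω)
    (hAD : ∀ ω ∈ A, ω ∉ D → 1 ≤ Z ω) {b : ℝ} (hb : SL.cE Z ≤ b) :
    SL.vLow A ≤ SL.V D + b := by
  have key : ∀ r s : ℝ, ∀ ξ ζ : Ω → ℝ,
      (∀ ω, Aᶜ.indicator (fun _ => (1 : ℝ)) ω ≤ ξ ω) → SL.E ξ = r →
      (∀ ω, D.indicator (fun _ => (1 : ℝ)) ω ≤ ζ ω) → SL.E ζ = s → 1 - s - b ≤ r := by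
    intro r s ξ ζ hξ hr hζ hs
    have hpt : ∀ ω, - Z ω ≤ (ξ ω + ζ ω) + (-1) := by
      intro ω
      have h1 := hξ ω
      have h2 := hζ ω
      have h3 := hZ ω
      by_cases hA : ω ∈ A <;> by_cases hD : ω ∈ D <;> simp [hA, hD] at h1 h2
      · linarith
      · linarith [hAD ω hA hD]
      · linarith
      · linarith
    have h : SL.E (fun ω => - Z ω) ≤ ((r + s + -1 : ℝ) : EReal) := by
      refine (SL.mono _ _ hpt).trans ((SL.subadd _ _).trans ?_)
      rw [SL.const_eq, EReal.coe_add, EReal.coe_add, ← hr, ← hs]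
      gcongr
      exact SL.subadd _ _
    have h' : ((-(r + s + -1) : ℝ) : EReal) ≤ b := by
      rw [EReal.coe_neg]
      exact (EReal.neg_le_neg_iff.2 h).trans hb
    have h'' := EReal.coe_le_coe_iff.1 h'
    linarith
  have h1 : ∀ s ∈ {x : ℝ | ∃ ζ : Ω → ℝ,
      (∀ ω, D.indicator (fun _ => (1 : ℝ)) ω ≤ ζ ω) ∧ SL.E ζ = (x : EReal)},
      1 - SL.V Aᶜ - b ≤ s := by
    rintro s ⟨ζ, hζ, hs⟩
    have : 1 - s - b ≤ SL.V Aᶜ := le_csInf (SL.V_nonempty _) (by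
      rintro r ⟨ξ, hξ, hr⟩
      exact key r s ξ ζ hξ hr hζ hs)
    linarith
  have h2 : 1 - SL.V Aᶜ - b ≤ SL.V D := le_csInf (SL.V_nonempty _) h1
  rw [vLow]
  linarith

lemma isBLip_exp_mul_min {l y : ℝ} (hl : 0 ≤ l) :
    IsBLip fun t => Real.exp (l * min t y) := by
  have hle : ∀ t, Real.exp (l * min t y) ≤ Real.exp (l * y) := fun t =>
    Real.exp_le_exp.2 (mul_le_mul_of_nonneg_left (min_le_right _ _) hl)
  refine ⟨⟨⟨Real.exp (l * y) * l, by positivity⟩, LipschitzWith.of_le_add_mul _ fun s t => ?_⟩,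
    Real.exp (l * y), fun t => by rw [abs_of_pos (Real.exp_pos _)]; exact hle t⟩
  have h1 : |min s y - min t y| ≤ |s - t| := by
    simpa using abs_min_sub_min_le_max s y t y
  have h2 : Real.exp (l * min t y) =
      Real.exp (l * min s y) * Real.exp (l * min t y - l * min s y) := by
    rw [← Real.exp_add]; ring_nf
  have h3 := Real.add_one_le_exp (l * min t y - l * min s y)
  have h4 : Real.exp (l * min s y) * (l * (min s y - min t y)) ≤
      Real.exp (l * y) * (l * |s - t|) := by
    refine (mul_le_mul_of_nonneg_left (mul_le_mul_of_nonneg_left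
      ((le_abs_self _).trans h1) hl) (Real.exp_pos _).le).trans ?_
    exact mul_le_mul_of_nonneg_right (hle s) (by positivity)
  have h5 := mul_le_mul_of_nonneg_left h3 (Real.exp_pos (l * min s y)).le
  rw [← h2] at h5
  change _ ≤ _ + Real.exp (l * y) * l * |s - t|
  nlinarith

/-- The conjugate exponential moment of a truncated variable with `ℰ[X] ≤ 0`. -/
lemma cE_exp_truncated_le {X : Ω → ℝ} {σ l y : ℝ} (hl : 0 < l) (hy : 0 < y)
    (hmean : SL.cE X ≤ 0) (hσ : SL.E (fun ω => X ω ^ 2) ≤ (σ : EReal)) :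
    0 ≤ (SL.cE fun ω => Real.exp (l * min (X ω) y)).toReal ∧
    (SL.cE fun ω => Real.exp (l * min (X ω) y)).toReal ≤
      Real.exp ((Real.exp (l * y) - 1 - l * y) / y ^ 2 * σ) := by
  set c : ℝ := (Real.exp (l * y) - 1 - l * y) / y ^ 2 with hc
  have hc0 : 0 ≤ c := by
    have := Real.add_one_le_exp (l * y)
    exact div_nonneg (by linarith) (by positivity)
  have hle : ∀ t, Real.exp (l * min t y) ≤ Real.exp (l * y) := fun t =>
    Real.exp_le_exp.2 (mul_le_mul_of_nonneg_left (min_le_right _ _) hl.le)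
  have hpt : ∀ ω, l * (- X ω) ≤
      (- Real.exp (l * min (X ω) y) + 1) + c * X ω ^ 2 := by
    intro ω
    have h1 := Real.exp_le_one_add_add_mul_sq (mul_pos hl hy)
      (mul_le_mul_of_nonneg_left (min_le_right (X ω) y) hl.le)
    have h2 : (Real.exp (l * y) - 1 - l * y) / (l * y) ^ 2 * (l * min (X ω) y) ^ 2 =
        c * min (X ω) y ^ 2 := by
      rw [hc]; field_simp
    have h3 : min (X ω) y ^ 2 ≤ X ω ^ 2 := by
      rcases le_total (X ω) y with h | h
      · rw [min_eq_left h]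
      · rw [min_eq_right h]; exact pow_le_pow_left₀ hy.le h 2
    have h4 := mul_le_mul_of_nonneg_left h3 hc0
    have h5 := mul_le_mul_of_nonneg_left (min_le_left (X ω) y) hl.le
    rw [h2] at h1
    linarith
  have hE := SL.coe_toReal_E (f := fun ω => - Real.exp (l * min (X ω) y))
    (fun ω => neg_le_neg (hle (X ω))) (fun ω => neg_nonpos.2 (Real.exp_pos _).le)
  set e : ℝ := (SL.E fun ω => - Real.exp (l * min (X ω) y)).toReal with he
  have hcE : (SL.cE fun ω => Real.exp (l * min (X ω) y)).toReal = -e := by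
    rw [cE, EReal.toReal_neg_eq]
  have he0 : e ≤ 0 := by
    have h := SL.mono (fun ω => - Real.exp (l * min (X ω) y)) (fun _ => 0)
      (fun ω => neg_nonpos.2 (Real.exp_pos _).le)
    rw [SL.const_eq, ← hE] at h
    exact_mod_cast h
  have hmean' : 0 ≤ SL.E fun ω => - X ω := by
    rw [cE] at hmean
    simpa using EReal.neg_le_neg_iff.2 hmean
  have h : (0 : EReal) ≤ ((e + 1 + c * σ : ℝ) : EReal) := by
    calc (0 : EReal) ≤ (l : EReal) * SL.E (fun ω => - X ω) :=
          mul_nonneg (by exact_mod_cast hl.le) hmean'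
      _ = SL.E (fun ω => l * (- X ω)) := (SL.pos_homog l hl.le _).symm
      _ ≤ SL.E (fun ω => (- Real.exp (l * min (X ω) y) + 1) + c * X ω ^ 2) := SL.mono _ _ hpt
      _ ≤ SL.E (fun ω => - Real.exp (l * min (X ω) y) + 1) + SL.E (fun ω => c * X ω ^ 2) :=
          SL.subadd _ _
      _ ≤ (SL.E (fun ω => - Real.exp (l * min (X ω) y)) + SL.E (fun _ => 1)) +
          SL.E (fun ω => c * X ω ^ 2) := by
          gcongr
          exact SL.subadd _ _
      _ ≤ ((e + 1 + c * σ : ℝ) : EReal) := by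
          rw [SL.const_eq, SL.pos_homog c hc0, ← hE, EReal.coe_add, EReal.coe_add, EReal.coe_mul]
          gcongr
  have h' : 0 ≤ e + 1 + c * σ := by exact_mod_cast h
  rw [hcE]
  exact ⟨by linarith, by linarith [Real.add_one_le_exp (c * σ)]⟩

/-- A Chernoff bound for the lower capacity, before optimizing over `l`. -/
lemma vLow_le_chernoff {n : ℕ} {X : Fin n → Ω → ℝ} {K : ℝ} (hK : 0 ≤ K)
    (hX : UENDFinConj SL K X) (hmean : ∀ k, SL.cE (X k) ≤ 0) {σ : Fin n → ℝ}
    (hσ : ∀ k, SL.E (fun ω => X k ω ^ 2) ≤ (σ k : EReal)) {B : ℝ} (hB : ∑ k, σ k ≤ B)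
    (x : ℝ) {y l : ℝ} (hy : 0 < y) (hl : 0 < l) :
    SL.vLow {ω | x ≤ ∑ k, X k ω} ≤ SL.V {ω | ∃ k, y ≤ X k ω} +
      K * Real.exp (-(l * x) + (Real.exp (l * y) - 1 - l * y) / y ^ 2 * B) := by
  set c : ℝ := (Real.exp (l * y) - 1 - l * y) / y ^ 2 with hc
  have hc0 : 0 ≤ c := by
    have := Real.add_one_le_exp (l * y)
    exact div_nonneg (by linarith) (by positivity)
  refine SL.vLow_le_add
    (Z := fun ω => Real.exp (-(l * x)) * ∏ k, Real.exp (l * min (X k ω) y))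
    (fun ω => by positivity) (fun ω hA hD => ?_) ?_
  · simp only [Set.mem_ofPred_eq, not_exists, not_le] at hA hD
    have : ∀ k, min (X k ω) y = X k ω := fun k => min_eq_left (hD k).le
    simp only [this]
    rw [← Real.exp_sum, ← Real.exp_add, ← Finset.mul_sum]
    exact Real.one_le_exp (by nlinarith [mul_le_mul_of_nonneg_left hA hl.le])
  · have hP := hX (fun _ t => Real.exp (l * min t y)) (fun _ => isBLip_exp_mul_min hl.le)
      (fun _ s t hst => Real.exp_le_exp.2
        (mul_le_mul_of_nonneg_left (min_le_min_right y hst) hl.le))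
      (fun _ _ => (Real.exp_pos _).le)
    have hprod : ∏ k, (SL.cE fun ω => Real.exp (l * min (X k ω) y)).toReal ≤
        Real.exp (c * B) := by
      refine (Finset.prod_le_prod
        (fun k _ => (SL.cE_exp_truncated_le hl hy (hmean k) (hσ k)).1)
        (fun k _ => (SL.cE_exp_truncated_le hl hy (hmean k) (hσ k)).2)).trans ?_
      rw [← Real.exp_sum, ← Finset.mul_sum]
      exact Real.exp_le_exp.2 (mul_le_mul_of_nonneg_left hB hc0)
    have heq : SL.cE (fun ω => Real.exp (-(l * x)) * ∏ k, Real.exp (l * min (X k ω) y)) =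
        (Real.exp (-(l * x)) : EReal) * SL.cE (fun ω => ∏ k, Real.exp (l * min (X k ω) y)) := by
      rw [cE, cE, mul_neg, ← SL.pos_homog _ (Real.exp_pos _).le]
      simp only [mul_neg]
    rw [heq]
    have hle := mul_le_mul_of_nonneg_left hP
      (show (0 : EReal) ≤ (Real.exp (-(l * x)) : EReal) by exact_mod_cast (Real.exp_pos _).le)
    refine hle.trans ?_
    rw [← EReal.coe_mul, EReal.coe_le_coe_iff, Real.exp_add]
    calc _ ≤ Real.exp (-(l * x)) * (K * Real.exp (c * B)) := by gcongr
      _ = _ := by ring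

/-- Bennett's inequality for the lower capacity. -/
lemma vLow_le_bennett {n : ℕ} {X : Fin n → Ω → ℝ} {K : ℝ} (hK : 0 ≤ K)
    (hX : UENDFinConj SL K X) (hmean : ∀ k, SL.cE (X k) ≤ 0) {σ : Fin n → ℝ}
    (hσ : ∀ k, SL.E (fun ω => X k ω ^ 2) ≤ (σ k : EReal)) {B : ℝ} (hB0 : 0 < B)
    (hB : ∑ k, σ k ≤ B) {x y : ℝ} (hx : 0 < x) (hy : 0 < y) :
    SL.vLow {ω | x ≤ ∑ k, X k ω} ≤ SL.V {ω | ∃ k, y ≤ X k ω} +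
      K * Real.exp (-(B / y ^ 2 * ((1 + x * y / B) * Real.log (1 + x * y / B) - x * y / B))) := by
  have hu : 0 < x * y / B := by positivity
  have hL : 0 < Real.log (1 + x * y / B) := Real.log_pos (by linarith)
  have h := SL.vLow_le_chernoff hK hX hmean hσ hB x hy (div_pos hL hy)
  rw [div_mul_cancel₀ _ hy.ne', Real.exp_log (by linarith)] at h
  convert h using 4
  field_simp
  ring

lemma V_exists_ge_le {n : ℕ} {X : Fin n → Ω → ℝ} {σ : Fin n → ℝ}
    (hσ : ∀ k, SL.E (fun ω => X k ω ^ 2) ≤ (σ k : EReal)) {y : ℝ} (hy : 0 < y) :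
    SL.V {ω | ∃ k, y ≤ X k ω} ≤ (∑ k, σ k) / y ^ 2 := by
  have hsum : ∀ s : Finset (Fin n),
      SL.E (fun ω => ∑ k ∈ s, X k ω ^ 2) ≤ ((∑ k ∈ s, σ k : ℝ) : EReal) := by
    intro s
    induction s using Finset.induction_on with
    | empty => simpa using (SL.const_eq 0).le
    | insert a s ha ih =>
      simp only [Finset.sum_insert ha, EReal.coe_add]
      exact (SL.subadd _ _).trans (add_le_add (hσ a) ih)
  have hy2 : 0 ≤ 1 / y ^ 2 := by positivity
  refine SL.V_le (ξ := fun ω => 1 / y ^ 2 * ∑ k, X k ω ^ 2) (fun ω => ?_) ?_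
  · refine Set.indicator_apply_le' (fun hω => ?_) (fun _ => by positivity)
    obtain ⟨k, hk⟩ := hω
    rw [one_div_mul_eq_div, le_div_iff₀ (by positivity), one_mul]
    exact (pow_le_pow_left₀ hy.le hk 2).trans
      (Finset.single_le_sum (f := fun k => X k ω ^ 2) (fun _ _ => sq_nonneg _)
        (Finset.mem_univ k))
  · rw [SL.pos_homog _ hy2, ← one_div_mul_eq_div (y ^ 2) (∑ k, σ k), EReal.coe_mul]
    have hy2' : (0 : EReal) ≤ ((1 / y ^ 2 : ℝ) : EReal) := by exact_mod_cast hy2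
    exact mul_le_mul_of_nonneg_left (hsum _) hy2'

/-- The Fuk–Nagaev form of Bennett's inequality. -/
lemma vLow_le_fukNagaev {n : ℕ} {X : Fin n → Ω → ℝ} {K : ℝ} (hK : 0 ≤ K)
    (hX : UENDFinConj SL K X) (hmean : ∀ k, SL.cE (X k) ≤ 0) {σ : Fin n → ℝ}
    (hσ : ∀ k, SL.E (fun ω => X k ω ^ 2) ≤ (σ k : EReal)) {B : ℝ} (hB0 : 0 < B)
    (hB : ∑ k, σ k ≤ B) {x y : ℝ} (hx : 0 < x) (hy : 0 < y) :
    SL.vLow {ω | x ≤ ∑ k, X k ω} ≤ SL.V {ω | ∃ k, y ≤ X k ω} +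
      K * Real.exp (-(x ^ 2 / (2 * (x * y + B))) *
        (1 + (2 / 3) * Real.log (1 + x * y / B))) := by
  refine (SL.vLow_le_bennett hK hX hmean hσ hB0 hB hx hy).trans ?_
  gcongr
  have h := mul_le_mul_of_nonneg_left (Real.le_bennett (u := x * y / B) (by positivity))
    (show 0 ≤ B / y ^ 2 by positivity)
  have h2 : B / y ^ 2 * ((x * y / B) ^ 2 / (2 * (1 + x * y / B)) *
      (1 + 2 / 3 * Real.log (1 + x * y / B))) =
      x ^ 2 / (2 * (x * y + B)) * (1 + 2 / 3 * Real.log (1 + x * y / B)) := by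
    rw [← mul_assoc]
    congr 1
    field_simp
    ring
  rw [h2] at h
  linarith

/-- A Kolmogorov-type inequality for the lower capacity. -/
lemma vLow_le_mul_div_sq {n : ℕ} {X : Fin n → Ω → ℝ} {K : ℝ} (hK : 0 ≤ K)
    (hX : UENDFinConj SL K X) (hmean : ∀ k, SL.cE (X k) ≤ 0) {σ : Fin n → ℝ}
    (hσ : ∀ k, SL.E (fun ω => X k ω ^ 2) ≤ (σ k : EReal)) {B : ℝ} (hB0 : 0 < B)
    (hB : ∑ k, σ k ≤ B) {x : ℝ} (hx : 0 < x) :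
    SL.vLow {ω | x ≤ ∑ k, X k ω} ≤ (1 + K * Real.exp 1) * (B / x ^ 2) := by
  have h1 := SL.vLow_le_bennett hK hX hmean hσ hB0 hB hx hx
  have h2 : SL.V {ω | ∃ k, x ≤ X k ω} ≤ B / x ^ 2 :=
    (SL.V_exists_ge_le hσ hx).trans (by gcongr)
  have hu : 0 < x * x / B := by positivity
  have hL : 0 < Real.log (1 + x * x / B) := Real.log_pos (by linarith)
  have h3 : Real.exp (-(B / x ^ 2 *
      ((1 + x * x / B) * Real.log (1 + x * x / B) - x * x / B))) ≤
      Real.exp 1 * (B / x ^ 2) := by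
    have heq : -(B / x ^ 2 * ((1 + x * x / B) * Real.log (1 + x * x / B) - x * x / B)) =
        1 - Real.log (1 + x * x / B) - B / x ^ 2 * Real.log (1 + x * x / B) := by
      field_simp
      ring
    calc _ ≤ Real.exp (1 - Real.log (1 + x * x / B)) := by
          rw [heq]
          refine Real.exp_le_exp.2 (sub_le_self _ (by positivity))
      _ = Real.exp 1 * (1 + x * x / B)⁻¹ := by
          rw [Real.exp_sub, Real.exp_log (by linarith), div_eq_mul_inv]
      _ ≤ Real.exp 1 * (x * x / B)⁻¹ := by
          gcongr
          linarith
      _ = Real.exp 1 * (B / x ^ 2) := by rw [inv_div, sq]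
  have h4 := mul_le_mul_of_nonneg_left h3 hK
  linarith

end SublinearExp

/-- Lemma 4.8 (a) and (c): tail inequalities for the lower capacity, for random
variables that are upper extended negatively dependent under the conjugate
expectation `ℰ`, with `ℰ[X_k] ≤ 0`. -/
theorem stmt16 {Ω : Type} (SL : SublinearExp Ω) (n : ℕ) (X : Fin n → Ω → ℝ)
    (K : ℝ) (hK : 1 ≤ K)
    (hUENDconj : SublinearExp.UENDFinConj SL K X)
    (hmean : ∀ k, SL.cE (X k) ≤ 0)
    (B : ℝ) (hB : (B : EReal) = ∑ k, SL.E fun ω => (X k ω) ^ 2) :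
    (∀ x y : ℝ, 0 < x → 0 < y →
      SL.vLow {ω | x ≤ ∑ k, X k ω} ≤
        SL.V {ω | ∃ k, y ≤ X k ω} +
          K * Real.exp (-(x ^ 2 / (2 * (x * y + B))) *
            (1 + (2 / 3) * Real.log (1 + x * y / B)))) ∧
    (∀ x : ℝ, 0 < x →
      SL.vLow {ω | x ≤ ∑ k, X k ω} ≤ (1 + K * Real.exp 1) * (B / x ^ 2)) := by
  have hK0 : 0 ≤ K := zero_le_one.trans hK
  have hnn : ∀ k, 0 ≤ SL.E fun ω => X k ω ^ 2 := fun k => SL.E_nonneg fun ω => sq_nonneg _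
  have hfin : ∀ k, ((SL.E fun ω => X k ω ^ 2).toReal : EReal) = SL.E fun ω => X k ω ^ 2 := by
    intro k
    have h : (SL.E fun ω => X k ω ^ 2) ≤ B := by
      rw [hB]
      exact Finset.single_le_sum (f := fun k => SL.E fun ω => X k ω ^ 2)
        (fun k _ => hnn k) (Finset.mem_univ k)
    exact EReal.coe_toReal (ne_top_of_le_ne_top (EReal.coe_ne_top B) h)
      (ne_bot_of_le_ne_bot EReal.zero_ne_bot (hnn k))
  have hσ : ∀ k, (SL.E fun ω => X k ω ^ 2) ≤
      (((SL.E fun ω => X k ω ^ 2).toReal : ℝ) : EReal) := fun k => (hfin k).ge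
  have hBsum : ∑ k, (SL.E fun ω => X k ω ^ 2).toReal = B := by
    rw [← EReal.coe_eq_coe_iff, hB]
    refine (map_sum (⟨⟨Real.toEReal, EReal.coe_zero⟩, EReal.coe_add⟩ : ℝ →+ EReal) _ _).trans ?_
    exact Finset.sum_congr rfl fun k _ => hfin k
  have hB0 : 0 ≤ B := hBsum ▸ Finset.sum_nonneg fun k _ => EReal.toReal_nonneg (hnn k)
  refine ⟨fun x y hx hy => ?_, fun x hx => ?_⟩
  · rcases hB0.eq_or_lt with h0 | h0
    · -- For `B = 0` the logarithm is `log 1 = 0`; apply the bound with `x * y / 3` in place of `B`.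
      refine (SL.vLow_le_fukNagaev hK0 hUENDconj hmean hσ (B := x * y / 3) (by positivity)
        (by rw [hBsum, ← h0]; positivity) hx hy).trans ?_
      refine add_le_add_right (mul_le_mul_of_nonneg_left (Real.exp_le_exp.2 ?_) hK0) _
      have hxy : x * y / (x * y / 3) = 3 := by field_simp
      have hlog : 1 / 2 ≤ Real.log (1 + 3) := by
        have := Real.pade_le_log_one_add (u := 3) (by norm_num)
        norm_num at this ⊢
        linarith
      rw [hxy, ← h0, neg_mul, neg_mul, neg_le_neg_iff]
      have heq : x ^ 2 / (2 * (x * y + 0)) * (1 + 2 / 3 * Real.log (1 + x * y / 0)) =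
          x ^ 2 / (2 * (x * y + x * y / 3)) * (1 + 1 / 3) := by
        simp only [div_zero, add_zero, Real.log_one, mul_zero]
        field_simp
      rw [heq]
      gcongr
      linarith
    · exact SL.vLow_le_fukNagaev hK0 hUENDconj hmean hσ h0 hBsum.le hx hy
  · have hlim : Tendsto (fun b : ℝ => (1 + K * Real.exp 1) * (b / x ^ 2)) (nhdsWithin B (Set.Ioi B))
        (nhds ((1 + K * Real.exp 1) * (B / x ^ 2))) :=
      (Continuous.tendsto (by fun_prop) B).mono_left nhdsWithin_le_nhds
    refine ge_of_tendsto hlim ?_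
    filter_upwards [self_mem_nhdsWithin] with b hb
    exact SL.vLow_le_mul_div_sq hK0 hUENDconj hmean hσ (hB0.trans_lt hb)
      (hBsum.le.trans (le_of_lt hb)) hx
end
end

section
/- Let X_1, X_2, … be identically distributed random variables in a sub-linear expectation space with 𝔼[|X_1|^{2+γ}] < ∞ for some γ > 0. Set S_n = Σ_{k=1}^n X_k, a_n = √(2n·log log n) (with log x = ln(max(x, e))), σ̄₁² = 𝔼[(X_1 − ℰ[X_1])²] and σ̄₂² = 𝔼[(X_1 − 𝔼[X_1])²]. If X_1, X_2, … are upper extended negatively dependent, then 𝕍*( limsup_{n→∞} (S_n − n·𝔼[X_1])/a_n > σ̄₂ ) = 0. If X_1, X_2, … are extended negatively dependent, then 𝕍*( { liminf_{n→∞} (S_n − n·ℰ[X_1])/a_n < −σ̄₁ } ∪ { limsup_{n→∞} (S_n − n·𝔼[X_1])/a_n > σ̄₂ } ) = 0. -/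
open Filter MeasureTheory
open scoped ENNReal NNReal

noncomputable section

namespace SublinearExp

variable {Ω : Type}

lemma E_ne_bot (SL : SublinearExp Ω) (X : Ω → ℝ) : SL.E X ≠ ⊥ := by
  intro h
  have h1 := SL.subadd X (fun ω => - X ω)
  have h2 := SL.const_eq 0
  simp only [add_neg_cancel, h, EReal.bot_add, h2, le_bot_iff] at h1
  exact EReal.coe_ne_bot 0 h1

lemma E_nonneg_s18 (SL : SublinearExp Ω) {X : Ω → ℝ} (h : ∀ ω, 0 ≤ X ω) : 0 ≤ SL.E X := by
  have := SL.mono (fun _ => 0) X h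
  rwa [SL.const_eq, EReal.coe_zero] at this

lemma E_add_le (SL : SublinearExp Ω) {X Y : Ω → ℝ} {a b : ℝ} (hX : SL.E X ≤ a)
    (hY : SL.E Y ≤ b) : SL.E (fun ω => X ω + Y ω) ≤ ((a + b : ℝ) : EReal) := by
  rw [EReal.coe_add]
  exact (SL.subadd X Y).trans (add_le_add hX hY)

lemma E_mul_le (SL : SublinearExp Ω) {X : Ω → ℝ} {a c : ℝ} (hc : 0 ≤ c) (hX : SL.E X ≤ a) :
    SL.E (fun ω => c * X ω) ≤ ((c * a : ℝ) : EReal) := by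
  rw [EReal.coe_mul, SL.pos_homog c hc]
  exact mul_le_mul_of_nonneg_left hX (EReal.coe_nonneg.2 hc)

lemma E_le_toReal (SL : SublinearExp Ω) {X : Ω → ℝ} (h : SL.E X ≠ ⊤) :
    SL.E X ≤ ((SL.E X).toReal : EReal) := EReal.le_coe_toReal h

lemma V_le_s18 (SL : SublinearExp Ω) {A : Set Ω} {ξ : Ω → ℝ} {c : ℝ} (h0 : ∀ ω, 0 ≤ ξ ω)
    (h1 : ∀ ω ∈ A, 1 ≤ ξ ω) (hc : SL.E ξ ≤ c) : SL.V A ≤ c := by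
  have htop : SL.E ξ ≠ ⊤ := ne_top_of_le_ne_top (EReal.coe_ne_top c) hc
  have hr : SL.E ξ = ((SL.E ξ).toReal : EReal) :=
    (EReal.coe_toReal htop (SL.E_ne_bot ξ)).symm
  have hle : (SL.E ξ).toReal ≤ c := by
    rw [hr] at hc
    exact EReal.coe_le_coe_iff.1 hc
  refine le_trans (csInf_le ⟨0, ?_⟩ ⟨ξ, fun ω => ?_, hr⟩) hle
  · rintro x ⟨η, hη, hx⟩
    have : (0 : EReal) ≤ SL.E η := SL.E_nonneg_s18 fun ω =>
      (Set.indicator_nonneg (fun _ _ => zero_le_one) ω).trans (hη ω)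
    rw [hx] at this
    exact EReal.coe_nonneg.1 this
  · by_cases hω : ω ∈ A
    · simpa [hω] using h1 ω hω
    · simpa [hω] using h0 ω

lemma V_empty_le (SL : SublinearExp Ω) : SL.V ∅ ≤ 0 :=
  SL.V_le_s18 (ξ := fun _ => 0) (fun _ => le_rfl) (by simp) (SL.const_eq 0).le

/-- The outer capacity as an outer measure. -/
def outer (SL : SublinearExp Ω) : OuterMeasure Ω :=
  OuterMeasure.ofFunction (fun A => ENNReal.ofReal (SL.V A))
    (ENNReal.ofReal_eq_zero.2 SL.V_empty_le)

lemma outer_apply (SL : SublinearExp Ω) (A : Set Ω) : SL.outer A = SL.Vout A := rfl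

lemma outer_le (SL : SublinearExp Ω) {A : Set Ω} {w : ℝ} (h : SL.V A ≤ w) :
    SL.outer A ≤ ENNReal.ofReal w :=
  (OuterMeasure.ofFunction_le A).trans (ENNReal.ofReal_le_ofReal h)

lemma outer_biUnion_range_le (SL : SublinearExp Ω) {k : ℕ} {A : ℕ → Set Ω} {w : ℝ}
    (h : ∀ i < k, SL.V (A i) ≤ w) :
    SL.outer (⋃ i ∈ Finset.range k, A i) ≤ ENNReal.ofReal (k * w) := by
  refine (measure_biUnion_finset_le _ _).trans ?_
  refine (Finset.sum_le_sum fun i hi => SL.outer_le (h i (Finset.mem_range.1 hi))).trans ?_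
  rw [Finset.sum_const, Finset.card_range, nsmul_eq_mul,
    ENNReal.ofReal_mul (Nat.cast_nonneg k), ENNReal.ofReal_natCast]

end SublinearExp

lemma exp_le_one_add_add_sq {y c : ℝ} (hyc : y ≤ c) (hc : 0 ≤ c) :
    Real.exp y ≤ 1 + y + y ^ 2 / 2 * Real.exp c := by
  rcases le_total y 0 with hy | hy
  · have h1 := Real.quadratic_le_exp_of_nonneg (neg_nonneg.2 hy)
    have h2 : Real.exp y * Real.exp (-y) = 1 := by rw [← Real.exp_add]; simp
    have h3 : Real.exp y ≤ 1 + y + y ^ 2 / 2 := by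
      have h4 : (1:ℝ) ≤ (1 + y + y ^ 2 / 2) * Real.exp (-y) := by
        have : 0 ≤ 1 + y + y ^ 2 / 2 := by nlinarith [sq_nonneg (y + 1)]
        nlinarith [mul_le_mul_of_nonneg_left h1 this, sq_nonneg (y ^ 2)]
      exact le_of_mul_le_mul_right (h2.le.trans h4) (Real.exp_pos _)
    have := Real.one_le_exp hc
    nlinarith [sq_nonneg y]
  · have hmono : MonotoneOn (fun z : ℝ => Real.exp (-z) * (1 + z) + z ^ 2 / 2) (Set.Ici 0) := by
      have hd : ∀ z : ℝ, HasDerivAt (fun z : ℝ => Real.exp (-z) * (1 + z) + z ^ 2 / 2)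
          (z * (1 - Real.exp (-z))) z := by
        intro z
        have h1 := (((hasDerivAt_id z).neg.exp).mul ((hasDerivAt_id z).const_add 1)).add
          (((hasDerivAt_id z).pow 2).div_const 2)
        refine h1.congr_deriv ?_
        simp
        ring
      refine monotoneOn_of_deriv_nonneg (convex_Ici 0)
        (fun z _ => (hd z).continuousAt.continuousWithinAt)
        (fun z _ => (hd z).differentiableAt.differentiableWithinAt) fun z hz => ?_
      rw [interior_Ici] at hz
      rw [(hd z).deriv]
      have hz0 : (0:ℝ) < z := hz
      exact mul_nonneg hz0.le (sub_nonneg.2 (Real.exp_le_one_iff.2 (by linarith)))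
    have h0 := hmono (Set.mem_Ici.2 le_rfl) (Set.mem_Ici.2 hy) hy
    simp only [neg_zero, Real.exp_zero, add_zero, mul_one] at h0
    have h2 : Real.exp y * Real.exp (-y) = 1 := by rw [← Real.exp_add]; simp
    have h3 : Real.exp y ≤ 1 + y + y ^ 2 / 2 * Real.exp y := by
      nlinarith [mul_le_mul_of_nonneg_left h0 (Real.exp_pos y).le]
    have h4 := mul_le_mul_of_nonneg_left (Real.exp_le_exp.2 hyc) (by positivity : 0 ≤ y ^ 2 / 2)
    linarith

/-- The truncated exponential `x ↦ exp (t * min x b)` is Lipschitz. -/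
lemma lipschitz_exp_min {t b : ℝ} (ht : 0 ≤ t) :
    LipschitzWith (Real.toNNReal (t * Real.exp (t * b)))
      (fun x : ℝ => Real.exp (t * min x b)) := by
  refine LipschitzWith.of_le_add_mul' _ fun x y => ?_
  have h1 : Real.exp (t * min x b) - Real.exp (t * min y b)
      ≤ Real.exp (t * min x b) * (t * (min x b - min y b)) := by
    have h2 := Real.add_one_le_exp (t * (min y b - min x b))
    have h3 : Real.exp (t * min y b)
        = Real.exp (t * min x b) * Real.exp (t * (min y b - min x b)) := by
      rw [← Real.exp_add]; ring_nf
    rw [h3]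
    nlinarith [Real.exp_pos (t * min x b)]
  have h4 : min x b - min y b ≤ dist x y := by
    have := abs_min_sub_min_le_max x b y b
    simp only [sub_self, abs_zero, abs_nonneg, sup_of_le_left] at this
    exact (le_abs_self _).trans this
  have h5 : Real.exp (t * min x b) ≤ Real.exp (t * b) :=
    Real.exp_le_exp.2 (mul_le_mul_of_nonneg_left (min_le_right _ _) ht)
  have h6 : Real.exp (t * min x b) * (t * (min x b - min y b))
      ≤ Real.exp (t * b) * (t * dist x y) :=
    (mul_le_mul_of_nonneg_left (mul_le_mul_of_nonneg_left h4 ht) (Real.exp_pos _).le).trans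
      (mul_le_mul_of_nonneg_right h5 (by positivity))
  linarith

namespace SublinearExp

variable {Ω : Type}

/-- The exponential moment of a truncated variable with non-positive mean. -/
lemma E_exp_min_le (SL : SublinearExp Ω) {Z : Ω → ℝ} {t b v : ℝ} (ht : 0 ≤ t) (hb : 0 ≤ b)
    (h1 : SL.E Z ≤ 0) (h2 : SL.E (fun ω => Z ω ^ 2) ≤ v) :
    SL.E (fun ω => Real.exp (t * min (Z ω) b))
      ≤ ((Real.exp (t ^ 2 * v * Real.exp (t * b) / 2) : ℝ) : EReal) := by
  have hpt : ∀ ω, Real.exp (t * min (Z ω) b)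
      ≤ 1 + (t * Z ω + t ^ 2 * Real.exp (t * b) / 2 * Z ω ^ 2) := by
    intro ω
    have h3 := exp_le_one_add_add_sq
      (mul_le_mul_of_nonneg_left (min_le_right (Z ω) b) ht) (mul_nonneg ht hb)
    have h4 : t * min (Z ω) b ≤ t * Z ω := mul_le_mul_of_nonneg_left (min_le_left _ _) ht
    have h5 : (min (Z ω) b) ^ 2 ≤ Z ω ^ 2 := by
      rcases le_total (Z ω) b with h | h
      · rw [min_eq_left h]
      · rw [min_eq_right h]
        exact pow_le_pow_left₀ hb h 2
    have h6 := mul_le_mul_of_nonneg_left h5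
      (by positivity : 0 ≤ t ^ 2 * Real.exp (t * b) / 2)
    nlinarith
  refine (SL.mono _ _ hpt).trans ?_
  have h7 := SL.E_add_le (SL.const_eq 1).le (SL.E_add_le (SL.E_mul_le (a := 0) ht h1)
    (SL.E_mul_le (by positivity : 0 ≤ t ^ 2 * Real.exp (t * b) / 2) h2))
  refine h7.trans (EReal.coe_le_coe_iff.2 ?_)
  have := Real.add_one_le_exp (t ^ 2 * v * Real.exp (t * b) / 2)
  nlinarith

/-- Identical distribution tested on Lipschitz functions only. -/
def LipIdent (SL : SublinearExp Ω) (Z : ℕ → Ω → ℝ) : Prop :=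
  ∀ (i : ℕ) (φ : ℝ → ℝ) (L : ℝ≥0), LipschitzWith L φ →
    SL.E (fun ω => φ (Z i ω)) = SL.E fun ω => φ (Z 0 ω)

lemma IdentDist.lipIdent {SL : SublinearExp Ω} {X : ℕ → Ω → ℝ} (h : SL.IdentDist X) :
    SL.LipIdent X := by
  refine fun i φ L hφ => h i φ ⟨L, 0, fun x y => ?_⟩
  have h1 := hφ.dist_le_mul x y
  rw [Real.dist_eq, Real.dist_eq] at h1
  have h2 : 0 ≤ (L : ℝ) * |x - y| := by positivity
  simp only [pow_zero]
  linarith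

/-- Chernoff bound for sums of truncated upper extended negatively dependent variables. -/
lemma V_sum_min_le {SL : SublinearExp Ω} {Z : ℕ → Ω → ℝ} {K v t b : ℝ} (hK : 0 ≤ K)
    (hid : SL.LipIdent Z) (hU : UEND SL K Z) (h1 : SL.E (Z 0) ≤ 0)
    (h2 : SL.E (fun ω => Z 0 ω ^ 2) ≤ v) (hv : 0 ≤ v) (ht : 0 ≤ t) (hb : 0 ≤ b)
    (a c : ℕ) (x m : ℝ) (hm : ((c - a : ℕ) : ℝ) ≤ m) :
    SL.V {ω | x < ∑ k ∈ Finset.Ico a c, min (Z k ω) b}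
      ≤ K * Real.exp (-(t * x) + m * (t ^ 2 * v * Real.exp (t * b) / 2)) := by
  set g : ℕ → ℝ → ℝ := fun i => if a ≤ i then fun x => Real.exp (t * min x b) else fun _ => 1
    with hg
  set r := t ^ 2 * v * Real.exp (t * b) / 2 with hr
  have hr0 : 0 ≤ r := by positivity
  have hg0 : ∀ i x, 0 ≤ g i x := by
    intro i x
    by_cases hi : a ≤ i <;> simp [hg, hi, Real.exp_nonneg]
  have hprod : ∀ ω, ∏ i ∈ Finset.range c, g i (Z i ω)
      = Real.exp (t * ∑ k ∈ Finset.Ico a c, min (Z k ω) b) := by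
    intro ω
    have hfil : Finset.Ico a c = (Finset.range c).filter (a ≤ ·) := by
      ext i; simp [and_comm]
    rw [Finset.mul_sum, Real.exp_sum, hfil, Finset.prod_filter]
    refine Finset.prod_congr rfl fun i _ => ?_
    by_cases hi : a ≤ i <;> simp [hg, hi]
  have hUE := hU c g ?_ ?_ hg0
  rotate_left
  · intro i
    by_cases hi : a ≤ i
    · simp only [hg, hi, if_true]
      refine ⟨⟨_, lipschitz_exp_min ht⟩, Real.exp (t * b), fun x => ?_⟩
      rw [abs_of_pos (Real.exp_pos _)]
      exact Real.exp_le_exp.2 (mul_le_mul_of_nonneg_left (min_le_right _ _) ht)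
    · simp only [hg, hi, if_false]
      exact ⟨⟨0, LipschitzWith.const 1⟩, 1, fun x => by simp⟩
  · intro i x y hxy
    by_cases hi : a ≤ i
    · simp only [hg, hi, if_true]
      exact Real.exp_le_exp.2 (mul_le_mul_of_nonneg_left (min_le_min_right _ hxy) ht)
    · simp [hg, hi]
  have hfac : ∀ i, 0 ≤ (SL.E fun ω => g i (Z i ω)).toReal ∧
      (SL.E fun ω => g i (Z i ω)).toReal ≤ if a ≤ i then Real.exp r else 1 := by
    intro i
    refine ⟨EReal.toReal_nonneg (SL.E_nonneg_s18 fun ω => hg0 i _), ?_⟩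
    by_cases hi : a ≤ i
    · simp only [hg, hi, if_true]
      rw [hid i _ _ (lipschitz_exp_min (b := b) ht)]
      have := EReal.toReal_le_toReal (SL.E_exp_min_le ht hb h1 h2) (SL.E_ne_bot _)
        (EReal.coe_ne_top _)
      simpa using this
    · simp only [hg, hi, if_false]
      rw [SL.const_eq]; simp
  have hfacs : ∏ i ∈ Finset.range c, (SL.E fun ω => g i (Z i ω)).toReal ≤ Real.exp (m * r) := by
    refine (Finset.prod_le_prod (fun i _ => (hfac i).1) fun i _ => (hfac i).2).trans ?_
    have hfil : (Finset.range c).filter (a ≤ ·) = Finset.Ico a c := by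
      ext i; simp [and_comm]
    rw [← Finset.prod_filter, hfil, Finset.prod_const, Nat.card_Ico, ← Real.exp_nat_mul]
    exact Real.exp_le_exp.2 (mul_le_mul_of_nonneg_right hm hr0)
  refine SL.V_le_s18 (ξ := fun ω => Real.exp (-(t * x)) * ∏ i ∈ Finset.range c, g i (Z i ω))
    (fun ω => by rw [hprod]; positivity) (fun ω hω => ?_)
    ((SL.E_mul_le (Real.exp_pos _).le hUE).trans (EReal.coe_le_coe_iff.2 ?_))
  · rw [hprod, ← Real.exp_add]
    have hω' : x < ∑ k ∈ Finset.Ico a c, min (Z k ω) b := hω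
    refine Real.one_le_exp ?_
    nlinarith [mul_le_mul_of_nonneg_left hω'.le ht]
  · rw [Real.exp_add]
    have := mul_le_mul_of_nonneg_left hfacs (mul_nonneg (Real.exp_pos (-(t * x))).le hK)
    linarith

/-- Tail bound from a moment of order `p`. -/
lemma V_tail_le {SL : SublinearExp Ω} {Z : ℕ → Ω → ℝ} {p C b : ℝ} (hid : SL.LipIdent Z)
    (hp : 0 < p) (hb : 0 < b) (hC : SL.E (fun ω => |Z 0 ω| ^ p) ≤ C) (i : ℕ) :
    SL.V {ω | b < Z i ω} ≤ 2 ^ p * C * (b ^ p)⁻¹ := by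
  set φ : ℝ → ℝ := fun x => max 0 (min 1 ((2 / b) * x - 1)) with hφ
  have hlip : LipschitzWith (Real.toNNReal (2 / b)) φ := by
    have h1 : LipschitzWith (Real.toNNReal (2 / b)) (fun x : ℝ => (2 / b) * x - 1) := by
      refine LipschitzWith.of_dist_le_mul fun x y => ?_
      rw [Real.coe_toNNReal _ (by positivity), Real.dist_eq, Real.dist_eq,
        ← abs_of_pos (by positivity : 0 < 2 / b), ← abs_mul, abs_of_pos (by positivity : 0 < 2 / b)]
      ring_nf; rfl
    exact (h1.const_min 1).const_max 0
  refine SL.V_le_s18 (ξ := fun ω => φ (Z i ω)) (fun ω => le_max_left _ _) (fun ω hω => ?_) ?_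
  · have hω' : b < Z i ω := hω
    have : 2 ≤ 2 / b * Z i ω := by
      rw [div_mul_eq_mul_div, le_div_iff₀ hb]; linarith
    exact le_max_of_le_right (le_min le_rfl (by linarith))
  · rw [hid i φ _ hlip]
    have hpt : ∀ ω, φ (Z 0 ω) ≤ (2 ^ p * (b ^ p)⁻¹) * |Z 0 ω| ^ p := by
      intro ω
      have hnn : 0 ≤ (2 ^ p * (b ^ p)⁻¹) * |Z 0 ω| ^ p := by positivity
      refine max_le hnn ?_
      by_cases h : b ≤ 2 * Z 0 ω
      · refine (min_le_left _ _).trans ?_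
        have h3 : (0:ℝ) ≤ Z 0 ω := by linarith
        rw [abs_of_nonneg h3, mul_right_comm, ← Real.mul_rpow (by norm_num) h3,
          ← div_eq_mul_inv, le_div_iff₀ (by positivity), one_mul]
        exact Real.rpow_le_rpow hb.le h hp.le
      · refine (min_le_right _ _).trans (le_trans ?_ hnn)
        have : 2 / b * Z 0 ω ≤ 1 := by
          rw [div_mul_eq_mul_div, div_le_iff₀ hb]; linarith
        linarith
    refine (SL.mono _ _ hpt).trans ((SL.E_mul_le (by positivity) hC).trans
      (EReal.coe_le_coe_iff.2 ?_))
    exact le_of_eq (by ring)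

end SublinearExp

/-- A partial sum is controlled by its values along a coarse grid and by its increments
over the cells of two nested grids. -/
lemma sum_le_of_grids {z : ℕ → ℝ} {b s l x : ℝ} {N M₁ M₂ : ℕ} (hM₁ : 0 < M₁) (hN₁ : M₁ ≤ N)
    (hM₂ : 0 < M₂) (hN₂ : M₂ ≤ N) (hs : 0 ≤ s) (hl : 0 ≤ l)
    (h0 : ∀ i < 2 * N, z i ≤ b)
    (h1 : ∀ i < 4 * M₁, 0 < i → ∑ k ∈ Finset.Ico 0 (i * (N / M₁)), min (z k) b
      ≤ s * √(2 * (i * (N / M₁) : ℕ) * l))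
    (h2 : ∀ i < 4 * M₂, ∑ k ∈ Finset.Ico (i * (N / M₂) / (N / M₁) * (N / M₁)) (i * (N / M₂)),
      min (z k) b ≤ x)
    (h3 : ∀ n < 2 * N, ∑ k ∈ Finset.Ico (n / (N / M₂) * (N / M₂)) n, min (z k) b ≤ x)
    {n : ℕ} (hn : n < 2 * N) :
    ∑ k ∈ Finset.range n, z k ≤ s * √(2 * n * l) + 2 * x := by
  set d₁ := N / M₁ with hd₁
  set d₂ := N / M₂ with hd₂
  have count : ∀ {M i : ℕ}, 0 < M → M ≤ N → i * (N / M) < 2 * N → i < 4 * M := by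
    intro M i hM hMN hi
    have e1 : 1 ≤ N / M := (Nat.one_le_div_iff hM).2 hMN
    have e2 := Nat.lt_mul_div_succ N hM
    have e3 : N < 2 * M * (N / M) := by nlinarith
    have e4 : i * (N / M) < 4 * M * (N / M) := by linarith
    exact Nat.lt_of_mul_lt_mul_right e4
  set i₂ := n / d₂ with hi₂
  set i₁ := i₂ * d₂ / d₁ with hi₁
  have hle₂ : i₂ * d₂ ≤ n := Nat.div_mul_le_self _ _
  have hle₁ : i₁ * d₁ ≤ i₂ * d₂ := Nat.div_mul_le_self _ _
  have hc₂ : i₂ < 4 * M₂ := count hM₂ hN₂ (hle₂.trans_lt hn)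
  have hc₁ : i₁ < 4 * M₁ := count hM₁ hN₁ ((hle₁.trans hle₂).trans_lt hn)
  have hsum : ∑ k ∈ Finset.range n, z k = ∑ k ∈ Finset.Ico 0 (i₁ * d₁), min (z k) b +
      ∑ k ∈ Finset.Ico (i₁ * d₁) (i₂ * d₂), min (z k) b +
      ∑ k ∈ Finset.Ico (i₂ * d₂) n, min (z k) b := by
    rw [Finset.sum_Ico_consecutive _ (Nat.zero_le _) hle₁,
      Finset.sum_Ico_consecutive _ (Nat.zero_le _) hle₂, Finset.range_eq_Ico]
    refine Finset.sum_congr rfl fun k hk => (min_eq_left (h0 k ?_)).symm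
    exact (Finset.mem_Ico.1 hk).2.trans hn
  have b1 : ∑ k ∈ Finset.Ico 0 (i₁ * d₁), min (z k) b ≤ s * √(2 * n * l) := by
    rcases Nat.eq_zero_or_pos i₁ with h | h
    · rw [h, zero_mul, Finset.Ico_self, Finset.sum_empty]
      positivity
    · refine (h1 i₁ hc₁ h).trans (mul_le_mul_of_nonneg_left (Real.sqrt_le_sqrt ?_) hs)
      have : ((i₁ * d₁ : ℕ) : ℝ) ≤ n := Nat.cast_le.2 (hle₁.trans hle₂)
      gcongr
  rw [hsum]
  linarith [h2 i₂ hc₂, h3 n hn]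

namespace SublinearExp

variable {Ω : Type}

/-- Union bound over the grids of `sum_le_of_grids`. -/
lemma outer_block_le (SL : SublinearExp Ω) {Z : ℕ → Ω → ℝ} {b s l x τ w₁ w₂ w₃ : ℝ}
    {N M₁ M₂ : ℕ} (hM₁ : 0 < M₁) (hN₁ : M₁ ≤ N)
    (hM₂ : 0 < M₂) (hN₂ : M₂ ≤ N) (hs : 0 ≤ s) (hl : 0 ≤ l) (hw₁ : 0 ≤ w₁)
    (h0 : ∀ i < 2 * N, SL.V {ω | b < Z i ω} ≤ τ)
    (h1 : ∀ i < 4 * M₁, 0 < i → SL.V {ω | s * √(2 * (i * (N / M₁) : ℕ) * l) <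
      ∑ k ∈ Finset.Ico 0 (i * (N / M₁)), min (Z k ω) b} ≤ w₁)
    (h2 : ∀ i < 4 * M₂, SL.V {ω | x <
      ∑ k ∈ Finset.Ico (i * (N / M₂) / (N / M₁) * (N / M₁)) (i * (N / M₂)),
        min (Z k ω) b} ≤ w₂)
    (h3 : ∀ n < 2 * N, SL.V {ω | x <
      ∑ k ∈ Finset.Ico (n / (N / M₂) * (N / M₂)) n, min (Z k ω) b} ≤ w₃) :
    SL.outer {ω | ∃ n < 2 * N, s * √(2 * n * l) + 2 * x < ∑ k ∈ Finset.range n, Z k ω} ≤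
      ENNReal.ofReal ((2 * N : ℕ) * τ) + ENNReal.ofReal ((4 * M₁ : ℕ) * w₁) +
      ENNReal.ofReal ((4 * M₂ : ℕ) * w₂) + ENNReal.ofReal ((2 * N : ℕ) * w₃) := by
  have h1' : ∀ i < 4 * M₁, SL.V {ω | 0 < i ∧ s * √(2 * (i * (N / M₁) : ℕ) * l) <
      ∑ k ∈ Finset.Ico 0 (i * (N / M₁)), min (Z k ω) b} ≤ w₁ := by
    intro i hi
    rcases Nat.eq_zero_or_pos i with h | h
    · simp only [h, lt_irrefl, false_and, Set.ofPred_false]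
      exact SL.V_empty_le.trans hw₁
    · simpa only [h, true_and] using h1 i hi h
  refine le_trans (measure_mono ?_) ((measure_union_le _ _).trans (add_le_add
    ((measure_union_le _ _).trans (add_le_add ((measure_union_le _ _).trans (add_le_add
      (SL.outer_biUnion_range_le h0) (SL.outer_biUnion_range_le h1')))
      (SL.outer_biUnion_range_le h2))) (SL.outer_biUnion_range_le h3)))
  rintro ω ⟨n, hn, hlt⟩
  by_contra hcon
  simp only [Set.mem_union, Set.mem_iUnion, Finset.mem_range, Set.mem_ofPred_eq, not_or,
    not_exists, not_lt, not_and] at hcon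
  obtain ⟨⟨⟨c0, c1⟩, c2⟩, c3⟩ := hcon
  exact absurd (sum_le_of_grids hM₁ hN₁ hM₂ hN₂ hs hl c0 c1 c2 c3 hn) (not_le.2 hlt)

end SublinearExp

/-- Exponent along the coarse grid, with the optimal parameter `t = y / (n v)`. -/
lemma exponent_coarse_le {y n v η e l s : ℝ} (hn : 0 < n) (hv : 0 < v)
    (hy : y ^ 2 = s ^ 2 * (2 * n * l)) (hl : 0 ≤ l) (he : e ≤ 1 + η) :
    -(y / (n * v) * y) + n * ((y / (n * v)) ^ 2 * v * e / 2) ≤ -(s ^ 2 / v * (1 - η)) * l := by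
  have h1 : -(y / (n * v) * y) + n * ((y / (n * v)) ^ 2 * v * e / 2)
      = s ^ 2 / v * l * (e - 2) := by
    have : -(y / (n * v) * y) + n * ((y / (n * v)) ^ 2 * v * e / 2)
      = y ^ 2 * (-(1 / (n * v)) + e / (n * v) / 2) := by field_simp
    rw [this, hy]
    field_simp
    ring
  rw [h1]
  have : 0 ≤ s ^ 2 / v * l := by positivity
  nlinarith

/-- Exponent for the increments over a cell of the coarse grid. -/
lemma exponent_medium_le {N M v c ε e l : ℝ} (hN : 0 < N) (hM : 0 < M) (hv : 0 ≤ v)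
    (hl : 0 ≤ l) (hc : c * ε = 5) (hcM : c ^ 2 * v ≤ M) (he : e ≤ 2) :
    -(c * √(l / N) * (ε * √(N * l))) + N / M * ((c * √(l / N)) ^ 2 * v * e / 2) ≤ -4 * l := by
  have h1 : √(l / N) * √(N * l) = l := by
    rw [← Real.sqrt_mul (by positivity)]
    have : l / N * (N * l) = l ^ 2 := by field_simp
    rw [this, Real.sqrt_sq hl]
  have h2 : c * √(l / N) * (ε * √(N * l)) = 5 * l := by
    rw [← hc]; linear_combination (c * ε) * h1
  have h3 : N / M * ((c * √(l / N)) ^ 2 * v * e / 2) = c ^ 2 * v / M * l * (e / 2) := by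
    rw [mul_pow, Real.sq_sqrt (by positivity)]
    field_simp
  have h4 : c ^ 2 * v / M ≤ 1 := (div_le_one hM).2 hcM
  have h5 : 0 ≤ c ^ 2 * v / M := by positivity
  have h6 : c ^ 2 * v / M * l * (e / 2) ≤ l := by
    have h7 : c ^ 2 * v / M * l ≤ l := by nlinarith
    have h8 : 0 ≤ c ^ 2 * v / M * l := by positivity
    nlinarith
  rw [h2, h3]
  linarith

/-- Exponent for the increments over a cell of the fine grid. -/
lemma exponent_fine_le {N j v c ε e l : ℝ} (hN : 0 < N) (hj : 0 < j) (hv : 0 ≤ v)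
    (hl : 1 ≤ l) (hc : c * ε = 2) (he : e ≤ 2) :
    -(c * (j / √N) * (ε * √(N * l))) + N / j ^ 2 * ((c * (j / √N)) ^ 2 * v * e / 2)
      ≤ -2 * j + c ^ 2 * v := by
  have hs : 0 < √N := Real.sqrt_pos.2 hN
  have h2 : c * (j / √N) * (ε * √(N * l)) = 2 * j * √l := by
    rw [← hc, Real.sqrt_mul hN.le]
    field_simp
  have h3 : N / j ^ 2 * ((c * (j / √N)) ^ 2 * v * e / 2) = c ^ 2 * v * (e / 2) := by
    rw [mul_pow, div_pow, Real.sq_sqrt hN.le]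
    field_simp
  have h4 : 1 ≤ √l := Real.one_le_sqrt.2 hl
  have h5 : 0 ≤ c ^ 2 * v := by positivity
  rw [h2, h3]
  nlinarith

lemma sqrt_le_lilA {j n : ℕ} (hj : 1 ≤ j) (hn : 2 ^ j ≤ n) :
    √(2 * n * Real.log (j * Real.log 2)) ≤ lilA n := by
  have hj' : (0:ℝ) < j := by exact_mod_cast hj
  have hl2 : 0 < Real.log 2 := Real.log_pos (by norm_num)
  refine Real.sqrt_le_sqrt (mul_le_mul_of_nonneg_left ?_ (by positivity))
  refine Real.log_le_log (by positivity) (le_max_of_le_left ?_)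
  rw [← Real.log_pow]
  refine Real.log_le_log (by positivity) (le_max_of_le_left ?_)
  exact_mod_cast hn

lemma sq_le_two_pow {j : ℕ} (hj : 4 ≤ j) : j ^ 2 ≤ 2 ^ j := by
  induction j, hj using Nat.le_induction with
  | base => norm_num
  | succ m hm ih =>
    rw [pow_succ 2 m]
    nlinarith

namespace SublinearExp

variable {Ω : Type}

/-- Outer capacity of an excess of the partial sums in the `j`-th dyadic block. -/
lemma outer_dyadic_le {SL : SublinearExp Ω} {Z : ℕ → Ω → ℝ} {K v p C b s ε η A l : ℝ}
    {M j : ℕ} (hK : 0 ≤ K) (hid : SL.LipIdent Z) (hU : UEND SL K Z) (h1 : SL.E (Z 0) ≤ 0)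
    (h2 : SL.E (fun ω => Z 0 ω ^ 2) ≤ v) (hv : 0 < v) (hp : 0 < p)
    (hC : SL.E (fun ω => |Z 0 ω| ^ p) ≤ C) (hb : 0 < b) (hs : 0 < s) (hε : 0 < ε)
    (hη : η ≤ 1) (hM0 : 0 < M) (hM : (5 / ε) ^ 2 * v ≤ M) (hA₁ : s / v * √(4 * M) ≤ A)
    (hA₂ : 5 / ε ≤ A) (hA₃ : 2 / ε ≤ A) (hj : 1 ≤ j) (hMj : M ≤ 2 ^ j) (hjj : j ^ 2 ≤ 2 ^ j)
    (hl : 1 ≤ l) (hlj : l ≤ j)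
    (he : Real.exp (A * (j / √(2 ^ j)) * b) ≤ 1 + η) :
    SL.outer {ω | ∃ n : ℕ, n < 2 * 2 ^ j ∧ s * √(2 * n * l) + 2 * (ε * √(2 ^ j * l)) <
        ∑ k ∈ Finset.range n, Z k ω} ≤
      ENNReal.ofReal ((2 * 2 ^ j : ℕ) * (2 ^ p * C * (b ^ p)⁻¹)) +
      ENNReal.ofReal ((4 * M : ℕ) * (K * Real.exp (-(s ^ 2 / v * (1 - η)) * l))) +
      ENNReal.ofReal ((4 * j ^ 2 : ℕ) * (K * Real.exp (-4 * l))) +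
      ENNReal.ofReal ((2 * 2 ^ j : ℕ) * (K * Real.exp (-2 * j + (2 / ε) ^ 2 * v))) := by
  have hl0 : 0 ≤ l := by linarith
  have hj0 : (1:ℝ) ≤ j := by exact_mod_cast hj
  have hN : (0:ℝ) < 2 ^ j := by positivity
  have hsN : (0:ℝ) < √(2 ^ j) := Real.sqrt_pos.2 hN
  have hM' : (0:ℝ) < M := by exact_mod_cast hM0
  have hA : 0 ≤ A := le_trans (by positivity) hA₂
  have hlsq : √l ≤ j := by
    rw [Real.sqrt_le_left (by linarith)]
    nlinarith
  have het : ∀ t, t ≤ A * (j / √(2 ^ j)) → Real.exp (t * b) ≤ 1 + η := fun t ht =>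
    (Real.exp_le_exp.2 (mul_le_mul_of_nonneg_right ht hb.le)).trans he
  have hcell : ∀ (m : ℕ) {D : ℕ}, 0 < D → D ≤ 2 ^ j →
      ((m - m / (2 ^ j / D) * (2 ^ j / D) : ℕ) : ℝ) ≤ 2 ^ j / D := by
    intro m D hD hDj
    have e1 : 1 ≤ 2 ^ j / D := (Nat.one_le_div_iff hD).2 hDj
    have e2 : m - m / (2 ^ j / D) * (2 ^ j / D) ≤ 2 ^ j / D := by
      have := Nat.lt_div_mul_add (a := m) (b := 2 ^ j / D) e1
      omega
    have e3 : ((2 ^ j / D : ℕ) : ℝ) ≤ ((2 ^ j : ℕ) : ℝ) / D := Nat.cast_div_le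
    push_cast at e3
    exact (Nat.cast_le.2 e2).trans e3
  refine SL.outer_block_le hM0 hMj (by positivity) hjj hs.le hl0 (by positivity)
    (fun i _ => V_tail_le hid hp hb hC i) (fun i _ hi => ?_) (fun i _ => ?_) (fun n _ => ?_)
  · set n := i * (2 ^ j / M) with hn
    have e1 : 1 ≤ 2 ^ j / M := (Nat.one_le_div_iff hM0).2 hMj
    have e2 : 2 ^ j ≤ 2 * M * n := by
      have e3 := Nat.lt_mul_div_succ (2 ^ j) hM0
      have e4 : 2 ^ j / M ≤ n := Nat.le_mul_of_pos_left _ hi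
      nlinarith
    have hnM : (2:ℝ) ^ j ≤ 2 * M * n := by exact_mod_cast e2
    have hn0 : (0:ℝ) < n := by
      have : 0 < n := Nat.mul_pos hi e1
      exact_mod_cast this
    set y := s * √(2 * n * l) with hy
    have hy2 : y ^ 2 = s ^ 2 * (2 * n * l) := by rw [hy, mul_pow, Real.sq_sqrt (by positivity)]
    have ht : y / (n * v) ≤ A * (j / √(2 ^ j)) := by
      have f1 : √(2 * n * l) / n ≤ √(4 * M) * (√l / √(2 ^ j)) := by
        rw [mul_div_assoc', ← Real.sqrt_mul (by positivity), div_le_div_iff₀ hn0 hsN,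
          ← Real.sqrt_mul (by positivity)]
        have f2 : √(4 * M * l) * n = √(4 * M * l * n ^ 2) := by
          rw [Real.sqrt_mul (by positivity : (0:ℝ) ≤ 4 * M * l), Real.sqrt_sq hn0.le]
        rw [f2]
        refine Real.sqrt_le_sqrt ?_
        have : 0 ≤ 2 * n * l := by positivity
        nlinarith [mul_le_mul_of_nonneg_left hnM this]
      have f3 : y / (n * v) = s / v * (√(2 * n * l) / n) := by rw [hy]; field_simp
      rw [f3]
      refine (mul_le_mul_of_nonneg_left f1 (by positivity)).trans ?_
      rw [← mul_assoc]
      gcongr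
    refine (V_sum_min_le hK hid hU h1 h2 hv.le (t := y / (n * v)) (by positivity) hb.le 0 n y n
      (by simp)).trans ?_
    gcongr
    exact exponent_coarse_le hn0 hv hy2 hl0 (het _ ht)
  · have ht : 5 / ε * √(l / 2 ^ j) ≤ A * (j / √(2 ^ j)) := by
      rw [Real.sqrt_div hl0]
      gcongr
    refine (V_sum_min_le hK hid hU h1 h2 hv.le (t := 5 / ε * √(l / 2 ^ j)) (by positivity) hb.le
      _ _ _ _ (hcell _ hM0 hMj)).trans ?_
    gcongr
    exact exponent_medium_le hN hM' hv.le hl0 (by field_simp) hM ((het _ ht).trans (by linarith))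
  · have ht : 2 / ε * (j / √(2 ^ j)) ≤ A * (j / √(2 ^ j)) := by
      gcongr
    refine (V_sum_min_le hK hid hU h1 h2 hv.le (t := 2 / ε * (j / √(2 ^ j))) (by positivity) hb.le
      _ _ _ _ (hcell _ (by positivity) hjj)).trans ?_
    push_cast
    refine mul_le_mul_of_nonneg_left (Real.exp_le_exp.2 ?_) hK
    exact exponent_fine_le hN (by linarith) hv.le hl (by field_simp)
      ((het _ ht).trans (by linarith))

/-- The upper half of the law of the iterated logarithm for variables with non-positive mean. -/
theorem ae_eventually_sum_le {SL : SublinearExp Ω} {Z : ℕ → Ω → ℝ} {K p C σ s : ℝ}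
    (hK : 0 ≤ K) (hid : SL.LipIdent Z) (hU : UEND SL K Z) (h1 : SL.E (Z 0) ≤ 0) (hσ : 0 ≤ σ)
    (h2 : SL.E (fun ω => Z 0 ω ^ 2) ≤ ((σ ^ 2 : ℝ) : EReal)) (hp : 2 < p)
    (hC : SL.E (fun ω => |Z 0 ω| ^ p) ≤ C) (hs : σ < s) :
    ∀ᵐ ω ∂SL.outer, ∀ᶠ n : ℕ in atTop, ∑ k ∈ Finset.range n, Z k ω ≤ s * lilA n := by
  obtain ⟨s₁, hσ₁, hs₁⟩ := exists_between hs
  obtain ⟨r, hσr, hrs⟩ := exists_between hσ₁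
  have hr0 : 0 < r := hσ.trans_lt hσr
  have hs0 : 0 < s₁ := hr0.trans hrs
  have hv : 0 < r ^ 2 := by positivity
  have h2' : SL.E (fun ω => Z 0 ω ^ 2) ≤ ((r ^ 2 : ℝ) : EReal) :=
    h2.trans (EReal.coe_le_coe_iff.2 (pow_le_pow_left₀ hσ hσr.le 2))
  have hq₀ : 1 < s₁ ^ 2 / r ^ 2 := by
    rw [one_lt_div hv]
    exact pow_lt_pow_left₀ hrs hr0.le two_ne_zero
  obtain ⟨q, hq1, hq⟩ := exists_between hq₀
  set η : ℝ := 1 - q / (s₁ ^ 2 / r ^ 2) with hη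
  have hqη : s₁ ^ 2 / r ^ 2 * (1 - η) = q := by
    have : s₁ ^ 2 / r ^ 2 ≠ 0 := by positivity
    rw [hη, sub_sub_cancel, mul_div_cancel₀ _ this]
  have hη0 : 0 < η := by
    rw [hη, sub_pos, div_lt_one (by positivity)]; exact hq
  have hη1 : η ≤ 1 := by
    rw [hη, sub_le_self_iff]
    have : 0 < q := by linarith
    positivity
  set ε : ℝ := (s - s₁) / 2 with hε
  have hε0 : 0 < ε := by rw [hε]; linarith
  obtain ⟨M, hM⟩ := exists_nat_ge ((5 / ε) ^ 2 * r ^ 2)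
  have hM0 : 0 < M := by
    have : (0:ℝ) < M := lt_of_lt_of_le (by positivity) hM
    exact_mod_cast this
  set A : ℝ := max (s₁ / r ^ 2 * √(4 * M)) (max (5 / ε) (2 / ε)) with hA
  obtain ⟨θ, hθp, hθ2⟩ : ∃ θ : ℝ, 1 / p < θ ∧ θ < 1 / 2 :=
    exists_between (one_div_lt_one_div_of_lt two_pos hp)
  set β : ℝ := 2 ^ θ with hβ
  have hβ0 : 0 < β := by positivity
  have hp0 : 0 < p := by linarith
  have hβp : 2 < β ^ p := by
    rw [hβ, ← Real.rpow_mul two_pos.le]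
    calc (2:ℝ) = 2 ^ (1:ℝ) := (Real.rpow_one 2).symm
      _ < 2 ^ (θ * p) := Real.rpow_lt_rpow_of_exponent_lt one_lt_two ((div_lt_iff₀ hp0).1 hθp)
  have hβs : β / √2 < 1 := by
    rw [div_lt_one (by positivity), hβ, Real.sqrt_eq_rpow]
    exact Real.rpow_lt_rpow_of_exponent_lt one_lt_two hθ2
  have hl2 : 0 < Real.log 2 := Real.log_pos one_lt_two
  set l : ℕ → ℝ := fun j => Real.log (j * Real.log 2) with hl
  set bad : ℕ → Set Ω := fun j => {ω | ∃ n : ℕ, n < 2 * 2 ^ j ∧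
    s₁ * √(2 * n * l j) + 2 * (ε * √(2 ^ j * l j)) < ∑ k ∈ Finset.range n, Z k ω} with hbad
  -- the estimates for a single block hold eventually
  have ev_exp : ∀ᶠ j : ℕ in atTop, Real.exp (A * (j / √(2 ^ j)) * β ^ j) ≤ 1 + η := by
    have t1 : Tendsto (fun j : ℕ => (j : ℝ) * (β / √2) ^ j) atTop (nhds 0) :=
      tendsto_self_mul_const_pow_of_lt_one (by positivity) hβs
    have t2 := (Real.continuous_exp.tendsto _).comp (t1.const_mul A)
    rw [mul_zero, Real.exp_zero] at t2
    filter_upwards [t2.eventually_le_const (by linarith : 1 < 1 + η)] with j hj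
    refine le_trans (le_of_eq ?_) hj
    have : √((2:ℝ) ^ j) = √2 ^ j := by
      rw [Real.sqrt_eq_rpow, Real.sqrt_eq_rpow, ← Real.rpow_natCast, ← Real.rpow_natCast,
        ← Real.rpow_mul two_pos.le, ← Real.rpow_mul two_pos.le, mul_comm]
    simp only [Function.comp, this, div_pow]
    ring_nf
  have ev_log : ∀ᶠ j : ℕ in atTop, 1 ≤ l j := by
    have : Tendsto l atTop atTop := Real.tendsto_log_atTop.comp
      (tendsto_natCast_atTop_atTop.atTop_mul_const hl2)
    exact this.eventually_ge_atTop 1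
  have ev_M : ∀ᶠ j : ℕ in atTop, M ≤ 2 ^ j :=
    (tendsto_pow_atTop_atTop_of_one_lt (one_lt_two : (1:ℕ) < 2)).eventually_ge_atTop M
  have hblock : ∀ᶠ j : ℕ in atTop, SL.outer (bad j) ≤
      ENNReal.ofReal (2 * (2 ^ p * C) * (2 / β ^ p) ^ j) +
      ENNReal.ofReal (4 * M * K * Real.log 2 ^ (-q) * (j : ℝ) ^ (-q)) +
      ENNReal.ofReal (4 * K * (Real.log 2 ^ 4)⁻¹ * ((j : ℝ) ^ 2)⁻¹) +
      ENNReal.ofReal (2 * K * Real.exp ((2 / ε) ^ 2 * r ^ 2) * (2 * Real.exp (-2)) ^ j) := by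
    filter_upwards [ev_exp, ev_log, ev_M, eventually_ge_atTop 4] with j e1 e2 e3 e4
    have hj0 : (0:ℝ) < j := by
      have : 0 < j := by omega
      exact_mod_cast this
    have hlj : l j ≤ j := by
      have := Real.log_le_sub_one_of_pos (mul_pos hj0 hl2)
      have h3 : Real.log 2 ≤ 1 := by linarith [Real.log_two_lt_d9]
      simp only [hl]
      nlinarith
    have hjj : j ^ 2 ≤ 2 ^ j := sq_le_two_pow e4
    have := outer_dyadic_le hK hid hU h1 h2' hv hp0 hC (pow_pos hβ0 j) hs0 hε0 hη1 hM0 hM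
      (le_max_left _ _) ((le_max_left _ _).trans (le_max_right _ _))
      ((le_max_right _ _).trans (le_max_right _ _)) (by omega) e3 hjj e2 hlj e1
    refine this.trans (le_of_eq ?_)
    congr 1
    · congr 1
      · congr 1
        · congr 1
          rw [← Real.rpow_natCast β, ← Real.rpow_mul hβ0.le, mul_comm (j : ℝ) p,
            Real.rpow_mul hβ0.le, Real.rpow_natCast, div_pow]
          push_cast
          ring
        · congr 1
          rw [hqη, neg_mul, mul_comm q, ← mul_neg, ← Real.rpow_def_of_pos (by positivity),
            Real.mul_rpow hj0.le hl2.le]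
          push_cast
          ring
      · congr 1
        have : Real.exp (-4 * l j) = ((j * Real.log 2) ^ 4)⁻¹ := by
          rw [← Real.exp_log (by positivity : (0:ℝ) < ((j * Real.log 2) ^ 4)⁻¹), Real.log_inv,
            Real.log_pow]
          congr 1
          push_cast
          ring
        rw [this]
        push_cast
        field_simp
    · congr 1
      rw [Real.exp_add, mul_pow, ← Real.exp_nat_mul]
      push_cast
      ring_nf
  obtain ⟨J, hJ⟩ := eventually_atTop.1 hblock
  have hfin : ∑' j, SL.outer (bad (j + J)) ≠ ∞ := by
    refine ne_top_of_le_ne_top ?_ (ENNReal.tsum_le_tsum fun j => hJ (j + J) (Nat.le_add_left _ _))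
    rw [ENNReal.tsum_add, ENNReal.tsum_add, ENNReal.tsum_add]
    have key : ∀ {f : ℕ → ℝ}, Summable f → ∑' j, ENNReal.ofReal (f (j + J)) ≠ ∞ := fun hf =>
      ((summable_nat_add_iff J).2 hf).tsum_ofReal_ne_top
    refine ENNReal.add_ne_top.2 ⟨ENNReal.add_ne_top.2 ⟨ENNReal.add_ne_top.2 ⟨?_, ?_⟩, ?_⟩, ?_⟩
    · refine key (f := fun j => 2 * (2 ^ p * C) * (2 / β ^ p) ^ j)
        (Summable.mul_left _ (summable_geometric_of_lt_one (by positivity) ?_))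
      exact (div_lt_one (by positivity)).2 hβp
    · refine key (f := fun j => 4 * M * K * Real.log 2 ^ (-q) * (j : ℝ) ^ (-q))
        (Summable.mul_left _ (Real.summable_nat_rpow.2 (by linarith)))
    · exact key (f := fun j => 4 * K * (Real.log 2 ^ 4)⁻¹ * ((j : ℝ) ^ 2)⁻¹)
        (Summable.mul_left _ (Real.summable_nat_pow_inv.2 one_lt_two))
    · refine key (f := fun j => 2 * K * Real.exp ((2 / ε) ^ 2 * r ^ 2) * (2 * Real.exp (-2)) ^ j)
        (Summable.mul_left _ (summable_geometric_of_lt_one (by positivity) ?_))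
      have : (2:ℝ) < Real.exp 2 := by linarith [Real.add_one_lt_exp (two_ne_zero : (2:ℝ) ≠ 0)]
      rw [Real.exp_neg, ← div_eq_mul_inv]
      exact (div_lt_one (by positivity)).2 this
  filter_upwards [ae_eventually_notMem hfin] with ω hω
  obtain ⟨J', hJ'⟩ := eventually_atTop.1 (hω.and ((tendsto_add_atTop_nat J).eventually ev_log))
  refine eventually_atTop.2 ⟨2 ^ (J' + J + 1), fun n hn => ?_⟩
  have hn0 : n ≠ 0 := by
    have : 0 < 2 ^ (J' + J + 1) := by positivity
    omega
  obtain ⟨j, hj⟩ : ∃ j, Nat.log 2 n = j + J :=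
    ⟨Nat.log 2 n - J, by have := Nat.le_log_of_pow_le one_lt_two hn; omega⟩
  have hjJ : J' ≤ j ∧ 1 ≤ j + J := by
    have := Nat.le_log_of_pow_le one_lt_two hn
    omega
  obtain ⟨hnot, hlpos⟩ := hJ' j hjJ.1
  have hle : 2 ^ (j + J) ≤ n := hj ▸ Nat.pow_log_le_self 2 hn0
  have hlt : n < 2 * 2 ^ (j + J) := by
    have := Nat.lt_pow_succ_log_self (one_lt_two) n
    rw [hj, pow_succ'] at this
    exact this
  have hsum : ∑ k ∈ Finset.range n, Z k ω ≤
      s₁ * √(2 * n * l (j + J)) + 2 * (ε * √(2 ^ (j + J) * l (j + J))) := by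
    by_contra hc
    exact hnot ⟨n, hlt, not_le.1 hc⟩
  have hle' : (2:ℝ) ^ (j + J) ≤ n := by exact_mod_cast hle
  have hsq : √(2 ^ (j + J) * l (j + J)) ≤ √(2 * n * l (j + J)) := by
    refine Real.sqrt_le_sqrt (mul_le_mul_of_nonneg_right ?_ (by linarith))
    have : (0:ℝ) ≤ n := n.cast_nonneg
    linarith
  have hlil := sqrt_le_lilA hjJ.2 hle
  calc ∑ k ∈ Finset.range n, Z k ω
      ≤ s₁ * √(2 * n * l (j + J)) + 2 * (ε * √(2 * n * l (j + J))) := by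
        refine hsum.trans ?_
        gcongr
    _ = s * √(2 * n * l (j + J)) := by rw [hε]; ring
    _ ≤ s * lilA n := mul_le_mul_of_nonneg_left hlil (by linarith)

end SublinearExp

namespace SublinearExp

variable {Ω : Type}

lemma LipIdent.comp {SL : SublinearExp Ω} {X : ℕ → Ω → ℝ} (h : SL.LipIdent X) {f : ℝ → ℝ}
    {L : ℝ≥0} (hf : LipschitzWith L f) : SL.LipIdent fun i ω => f (X i ω) :=
  fun i _ _ hφ => h i _ _ (hφ.comp hf)

lemma IsBLip.comp {g f : ℝ → ℝ} {L : ℝ≥0} (hg : IsBLip g) (hf : LipschitzWith L f) :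
    IsBLip fun x => g (f x) := by
  obtain ⟨⟨L', hL'⟩, B, hB⟩ := hg
  exact ⟨⟨_, hL'.comp hf⟩, B, fun x => hB _⟩

lemma UEND.comp_monotone {SL : SublinearExp Ω} {K : ℝ} {X : ℕ → Ω → ℝ} (h : UEND SL K X)
    {f : ℝ → ℝ} {L : ℝ≥0} (hf : LipschitzWith L f) (hm : Monotone f) :
    UEND SL K fun i ω => f (X i ω) :=
  fun n g hg hgm hg0 => h n (fun i x => g i (f x)) (fun i => (hg i).comp hf)
    (fun i => (hgm i).comp hm) fun i _ => hg0 i _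

lemma LEND.comp_antitone {SL : SublinearExp Ω} {K : ℝ} {X : ℕ → Ω → ℝ} (h : LEND SL K X)
    {f : ℝ → ℝ} {L : ℝ≥0} (hf : LipschitzWith L f) (hm : Antitone f) :
    UEND SL K fun i ω => f (X i ω) :=
  fun n g hg hgm hg0 => h n (fun i x => g i (f x)) (fun i => (hg i).comp hf)
    (fun i => (hgm i).comp_antitone hm) fun i _ => hg0 i _

lemma abs_pow_le_one_add_rpow (x : ℝ) {p : ℝ} {k : ℕ} (hk : (k : ℝ) ≤ p) :
    |x| ^ k ≤ 1 + |x| ^ p := by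
  have h0 : 0 ≤ |x| ^ p := by positivity
  rcases le_total |x| 1 with h | h
  · linarith [pow_le_one₀ (n := k) (abs_nonneg x) h]
  · have := Real.rpow_le_rpow_of_exponent_le h hk
    rw [Real.rpow_natCast] at this
    linarith

lemma abs_sub_rpow_le (x c : ℝ) {p : ℝ} (hp : 0 ≤ p) :
    |x - c| ^ p ≤ 2 ^ p * |x| ^ p + 2 ^ p * |c| ^ p := by
  have h1 : |x - c| ≤ 2 * max |x| |c| :=
    (abs_sub x c).trans (by linarith [le_max_left |x| |c|, le_max_right |x| |c|])
  have h2 := Real.rpow_le_rpow (abs_nonneg _) h1 hp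
  rw [Real.mul_rpow two_pos.le (le_max_of_le_left (abs_nonneg x))] at h2
  refine h2.trans ?_
  rw [← mul_add]
  refine mul_le_mul_of_nonneg_left ?_ (by positivity)
  have hx : 0 ≤ |x| ^ p := by positivity
  have hc : 0 ≤ |c| ^ p := by positivity
  rcases max_choice |x| |c| with h | h <;> rw [h] <;> linarith

/-- The upper half of the law of the iterated logarithm. -/
theorem Vout_limsup_gt_eq_zero {SL : SublinearExp Ω} {X : ℕ → Ω → ℝ} {K γ : ℝ} (hK : 0 ≤ K)
    (hid : SL.LipIdent X) (hγ : 0 < γ) (hmom : SL.E (fun ω => |X 0 ω| ^ (2 + γ)) ≠ ⊤)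
    (hU : UEND SL K X) :
    SL.Vout {ω |
        ((√((SL.E fun ω' => (X 0 ω' - (SL.E (X 0)).toReal) ^ 2).toReal) : ℝ) : EReal) <
          limsup (fun n : ℕ =>
            ((((∑ k ∈ Finset.range n, X k ω) - n * (SL.E (X 0)).toReal) /
                lilA n : ℝ) : EReal)) atTop} = 0 := by
  set p := 2 + γ with hp
  set μ := (SL.E (X 0)).toReal with hμ
  have hXp := SL.E_le_toReal hmom
  have hX : SL.E (X 0) ≠ ⊤ := by
    refine ne_top_of_le_ne_top (EReal.coe_ne_top _)
      ((SL.mono _ _ fun ω => ?_).trans (SL.E_add_le (SL.const_eq 1).le hXp))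
    have := abs_pow_le_one_add_rpow (X 0 ω) (p := p) (k := 1) (by push_cast; linarith)
    rw [pow_one] at this
    exact (le_abs_self _).trans this
  have hZp := (SL.mono _ _ fun ω => abs_sub_rpow_le (X 0 ω) μ (by linarith : 0 ≤ p)).trans
    (SL.E_add_le (SL.E_mul_le (by positivity) hXp) (SL.const_eq (2 ^ p * |μ| ^ p)).le)
  have hZ2 : SL.E (fun ω => (X 0 ω - μ) ^ 2) ≠ ⊤ := by
    refine ne_top_of_le_ne_top (EReal.coe_ne_top _)
      ((SL.mono _ _ fun ω => ?_).trans (SL.E_add_le (SL.const_eq 1).le hZp))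
    have := abs_pow_le_one_add_rpow (X 0 ω - μ) (p := p) (k := 2) (by push_cast; linarith)
    rwa [sq_abs] at this
  have hZ1 : SL.E (fun ω => X 0 ω - μ) ≤ 0 := by
    have := SL.E_add_le (SL.E_le_toReal hX) (SL.const_eq (-μ)).le
    simpa only [← sub_eq_add_neg, ← hμ, sub_self, EReal.coe_zero] using this
  set σ := √((SL.E fun ω' => (X 0 ω' - μ) ^ 2).toReal) with hσ
  have hσ2 : SL.E (fun ω => (X 0 ω - μ) ^ 2) ≤ ((σ ^ 2 : ℝ) : EReal) := by
    rw [hσ, Real.sq_sqrt (EReal.toReal_nonneg (SL.E_nonneg_s18 fun ω => sq_nonneg _))]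
    exact SL.E_le_toReal hZ2
  have hlip : LipschitzWith (1 + 0) fun x : ℝ => x - μ :=
    LipschitzWith.id.sub (LipschitzWith.const μ)
  have hae : ∀ᵐ ω ∂SL.outer, ∀ m : ℕ, ∀ᶠ n : ℕ in atTop,
      ∑ k ∈ Finset.range n, (X k ω - μ) ≤ (σ + 1 / ((m : ℝ) + 1)) * lilA n :=
    ae_all_iff.2 fun m => ae_eventually_sum_le hK (hid.comp hlip)
      (hU.comp_monotone hlip fun x y h => sub_le_sub_right h μ) hZ1 (Real.sqrt_nonneg _) hσ2
      (by linarith) hZp (lt_add_of_pos_right σ (by positivity))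
  rw [← outer_apply]
  refine measure_mono_null (fun ω hω => ?_) (mem_ae_iff.1 hae)
  rw [Set.mem_compl_iff]
  intro hall
  refine absurd (EReal.le_of_forall_lt_iff_le.1 fun z hz => ?_) (not_le.2 hω)
  obtain ⟨m, hm⟩ := exists_nat_one_div_lt (sub_pos.2 (EReal.coe_lt_coe_iff.1 hz))
  refine limsup_le_of_le (h := ?_)
  filter_upwards [hall m] with n hn
  rw [EReal.coe_le_coe_iff]
  rw [Finset.sum_sub_distrib, Finset.sum_const, Finset.card_range, nsmul_eq_mul] at hn
  have hσz : 0 ≤ z := (Real.sqrt_nonneg _).trans (EReal.coe_lt_coe_iff.1 hz).le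
  refine div_le_of_le_mul₀ (Real.sqrt_nonneg _) hσz (hn.trans ?_)
  exact mul_le_mul_of_nonneg_right (by linarith) (Real.sqrt_nonneg _)

end SublinearExp

/-- Theorem 5.1: law of the iterated logarithm for (upper) extended negatively
dependent, identically distributed random variables with a finite `(2+γ)`-th
moment.  Here `σ̄₁² = 𝔼[(X₁ − ℰ[X₁])²]`, `σ̄₂² = 𝔼[(X₁ − 𝔼[X₁])²]` and
`a_n = √(2 n log log n)`. -/
theorem stmt18 {Ω : Type} (SL : SublinearExp Ω) (X : ℕ → Ω → ℝ)
    (K : ℝ) (hK : 1 ≤ K)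
    (hid : SublinearExp.IdentDist SL X)
    (γ : ℝ) (hγ : 0 < γ)
    (hmom : SL.E (fun ω => |X 0 ω| ^ (2 + γ)) ≠ ⊤) :
    (SublinearExp.UEND SL K X →
      SL.Vout {ω |
        ((Real.sqrt
            ((SL.E fun ω' => (X 0 ω' - (SL.E (X 0)).toReal) ^ 2).toReal) : ℝ) : EReal) <
          limsup (fun n : ℕ =>
            ((((∑ k ∈ Finset.range n, X k ω) - n * (SL.E (X 0)).toReal) /
                lilA n : ℝ) : EReal)) atTop} = 0) ∧
    (SublinearExp.END SL K X →
      SL.Vout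
        ({ω | liminf (fun n : ℕ =>
              ((((∑ k ∈ Finset.range n, X k ω) - n * (SL.cE (X 0)).toReal) /
                  lilA n : ℝ) : EReal)) atTop <
            ((-Real.sqrt
                ((SL.E fun ω' => (X 0 ω' - (SL.cE (X 0)).toReal) ^ 2).toReal) : ℝ) : EReal)} ∪
         {ω | ((Real.sqrt
                ((SL.E fun ω' => (X 0 ω' - (SL.E (X 0)).toReal) ^ 2).toReal) : ℝ) : EReal) <
            limsup (fun n : ℕ =>
              ((((∑ k ∈ Finset.range n, X k ω) - n * (SL.E (X 0)).toReal) /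
                  lilA n : ℝ) : EReal)) atTop}) = 0) := by
  have hK0 : 0 ≤ K := zero_le_one.trans hK
  have hup := fun hU => SublinearExp.Vout_limsup_gt_eq_zero hK0 hid.lipIdent hγ hmom hU
  refine ⟨hup, fun hE => ?_⟩
  have hlip : LipschitzWith 1 fun x : ℝ => -x := LipschitzWith.id.neg
  have hlow := SublinearExp.Vout_limsup_gt_eq_zero (X := fun i ω => -X i ω) hK0
    (hid.lipIdent.comp hlip) hγ (by simpa only [abs_neg] using hmom)
    (hE.2.comp_antitone hlip fun _ _ h => neg_le_neg h)
  rw [← SublinearExp.outer_apply] at hlow ⊢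
  refine measure_union_null (measure_mono_null (fun ω hω => ?_) hlow) (hup hE.1)
  have hc : (SL.cE (X 0)).toReal = -(SL.E fun ω => -X 0 ω).toReal := EReal.toReal_neg_eq
  set μ := (SL.E fun ω => -X 0 ω).toReal with hμ
  have hω' := EReal.neg_lt_neg_iff.2 (Set.mem_ofPred_eq ▸ hω)
  rw [← EReal.limsup_neg, EReal.coe_neg, neg_neg, hc] at hω'
  have hsq : (fun ω' => (X 0 ω' - -μ) ^ 2) = fun ω' => (-X 0 ω' - μ) ^ 2 := by
    funext ω'
    ring
  have hseq : (-fun n : ℕ => ((((∑ k ∈ Finset.range n, X k ω) - n * -μ) / lilA n : ℝ) : EReal))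
      = fun n : ℕ => ((((∑ k ∈ Finset.range n, -X k ω) - n * μ) / lilA n : ℝ) : EReal) := by
    funext n
    rw [Pi.neg_apply, ← EReal.coe_neg, Finset.sum_neg_distrib]
    congr 1
    ring
  rw [hsq, hseq] at hω'
  exact hω'
end
end

section
/- Let X_1, X_2, … be identically distributed real random variables on a probability space (Ω, ℱ, P) which are extended negatively dependent with some dominating constant K ≥ 1, with E[|X_1|^{2+γ}] < ∞ for some γ > 0, and let σ² = Var(X_1). Set S_n = Σ_{k=1}^n X_k and a_n = √(2n·log log n) (with log x = ln(max(x, e))). Then P( limsup_{n→∞} |S_n − n·E[X_1]|/a_n ≤ σ ) = 1. -/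
open Filter MeasureTheory
open scoped ENNReal NNReal

noncomputable section

/-- Extended negative dependence (classical, on a probability space) with
dominating constant `K`: the joint lower-left and upper-right tails are
dominated by `K` times the product of the marginal tails. -/
def ENDProb {Ω : Type} [MeasurableSpace Ω] (P : Measure Ω) (K : ℝ)
    (X : ℕ → Ω → ℝ) : Prop :=
  ∀ (n : ℕ) (x : ℕ → ℝ),
    (P (⋂ i ∈ Finset.range n, {ω | X i ω ≤ x i}) ≤
      ENNReal.ofReal K * ∏ i ∈ Finset.range n, P {ω | X i ω ≤ x i}) ∧
    (P (⋂ i ∈ Finset.range n, {ω | x i < X i ω}) ≤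
      ENNReal.ofReal K * ∏ i ∈ Finset.range n, P {ω | x i < X i ω})

theorem Real.exp_le_quadratic_of_le {x c : ℝ} (hxc : x ≤ c) (hc0 : 0 ≤ c) (hc1 : c ≤ 1) :
    Real.exp x ≤ 1 + x + x ^ 2 / 2 * (1 + c) := by
  rcases le_total x 0 with hx | hx
  · have h1 := Real.quadratic_le_exp_of_nonneg (x := -x) (by linarith)
    have h2 : Real.exp x * Real.exp (-x) = 1 := by rw [← Real.exp_add]; simp
    have h3 : 0 < Real.exp x := Real.exp_pos x
    have h4 : Real.exp x ≤ 1 + x + x ^ 2 / 2 := by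
      have h5 : Real.exp x * (1 + -x + (-x) ^ 2 / 2) ≤ 1 := by
        exact (mul_le_mul_of_nonneg_left h1 h3.le).trans_eq h2
      have h6 : 0 < 1 + -x + (-x) ^ 2 / 2 := by nlinarith [sq_nonneg x]
      have h7 : 1 ≤ (1 + x + x ^ 2 / 2) * (1 + -x + (-x) ^ 2 / 2) := by
        nlinarith [sq_nonneg (x ^ 2)]
      exact le_of_mul_le_mul_right (h5.trans h7) h6
    nlinarith [mul_nonneg (sq_nonneg x) hc0]
  · have h1 := Real.exp_bound (x := x) (n := 3) (by rw [abs_of_nonneg hx]; linarith) (by norm_num)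
    have h2 := (abs_le.1 h1).2
    norm_num [Finset.sum_range_succ, Nat.factorial, abs_of_nonneg hx] at h2
    nlinarith [mul_nonneg (sq_nonneg x) (sub_nonneg.2 hxc), pow_nonneg hx 3]

/-- If the joint upper tails are dominated by a product, then so is the expectation of the product
of the positive parts. -/
theorem lintegral_prod_ofReal_le {Ω ι : Type*} [MeasurableSpace Ω] {Y : ι → Ω → ℝ}
    (hY : ∀ i, Measurable (Y i)) {m : ι → ℝ → ℝ≥0∞} (hm : ∀ i, Measurable (m i)) (s : Finset ι) :
    ∀ (Q : Measure Ω) [IsFiniteMeasure Q] (C : ℝ≥0∞),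
      (∀ t : ι → ℝ, (∀ i, 0 < t i) →
        Q (⋂ i ∈ s, {ω | t i < Y i ω}) ≤ C * ∏ i ∈ s, m i (t i)) →
      ∫⁻ ω, ∏ i ∈ s, ENNReal.ofReal (Y i ω) ∂Q ≤ C * ∏ i ∈ s, ∫⁻ t in Set.Ioi 0, m i t := by
  classical
  induction s using Finset.induction_on with
  | empty =>
    intro Q _ C h
    simpa using h (fun _ => 1) (fun _ => one_pos)
  | insert a s ha ih =>
    intro Q _ C h
    have hW : Measurable fun ω => ∏ i ∈ s, ENNReal.ofReal (Y i ω) := by fun_prop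
    have hmeas : MeasurableSet {p : Ω × ℝ | p.2 < Y a p.1} :=
      measurableSet_lt measurable_snd ((hY a).comp measurable_fst)
    have key : ∀ t > (0 : ℝ), ∫⁻ ω in {ω | t < Y a ω}, ∏ i ∈ s, ENNReal.ofReal (Y i ω) ∂Q ≤
        C * m a t * ∏ i ∈ s, ∫⁻ t in Set.Ioi 0, m i t := by
      intro t ht
      refine ih (Q.restrict _) _ fun u hu => ?_
      have h1 := h (Function.update u a t) fun i => by
        by_cases hi : i = a
        · subst hi; simpa using ht
        · simpa [hi] using hu i
      rw [Measure.restrict_apply' (measurableSet_lt measurable_const (hY a)), mul_assoc]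
      rw [Finset.prod_insert ha, Finset.set_biInter_insert, Function.update_self,
        Set.inter_comm] at h1
      have e1 : (⋂ i ∈ s, {ω | Function.update u a t i < Y i ω}) = ⋂ i ∈ s, {ω | u i < Y i ω} :=
        Set.iInter₂_congr fun i hi => by
          rw [Function.update_of_ne (ne_of_mem_of_not_mem hi ha)]
      have e2 : ∏ i ∈ s, m i (Function.update u a t i) = ∏ i ∈ s, m i (u i) :=
        Finset.prod_congr rfl fun i hi => by
          rw [Function.update_of_ne (ne_of_mem_of_not_mem hi ha)]
      rwa [e1, e2] at h1
    calc ∫⁻ ω, ∏ i ∈ insert a s, ENNReal.ofReal (Y i ω) ∂Q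
        = ∫⁻ ω, (∫⁻ t in Set.Ioi (0 : ℝ), {p : Ω × ℝ | p.2 < Y a p.1}.indicator
            (fun p => ∏ i ∈ s, ENNReal.ofReal (Y i p.1)) (ω, t)) ∂Q := by
          refine lintegral_congr fun ω => ?_
          rw [Finset.prod_insert ha]
          have e : (fun t : ℝ => {p : Ω × ℝ | p.2 < Y a p.1}.indicator
              (fun p => ∏ i ∈ s, ENNReal.ofReal (Y i p.1)) (ω, t)) =
              (Set.Iio (Y a ω)).indicator fun _ => ∏ i ∈ s, ENNReal.ofReal (Y i ω) := by
            ext t; simp [Set.indicator]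
          rw [e, lintegral_indicator measurableSet_Iio, lintegral_const,
            Measure.restrict_apply MeasurableSet.univ, Set.univ_inter,
            Measure.restrict_apply measurableSet_Iio, Set.inter_comm, Set.Ioi_inter_Iio,
            Real.volume_Ioo, sub_zero, mul_comm]
      _ = ∫⁻ t in Set.Ioi (0 : ℝ), ∫⁻ ω in {ω | t < Y a ω},
            ∏ i ∈ s, ENNReal.ofReal (Y i ω) ∂Q := by
          rw [lintegral_lintegral_swap]
          · refine lintegral_congr fun t => ?_
            rw [← lintegral_indicator (measurableSet_lt measurable_const (hY a))]
            rfl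
          · exact ((hW.comp measurable_fst).indicator hmeas).aemeasurable
      _ ≤ ∫⁻ t in Set.Ioi (0 : ℝ), C * m a t * ∏ i ∈ s, ∫⁻ t in Set.Ioi 0, m i t :=
          setLIntegral_mono' measurableSet_Ioi key
      _ = C * ∏ i ∈ insert a s, ∫⁻ t in Set.Ioi 0, m i t := by
          rw [lintegral_mul_const _ ((hm a).const_mul C), lintegral_const_mul _ (hm a),
            Finset.prod_insert ha, mul_assoc]

/-- Domination of the joint upper tails of every finite subfamily, with constant `K`. -/
def UpperEND {Ω : Type*} [MeasurableSpace Ω] (P : Measure Ω) (K : ℝ) (X : ℕ → Ω → ℝ) : Prop :=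
  ∀ (s : Finset ℕ) (x : ℕ → ℝ), P (⋂ i ∈ s, {ω | x i < X i ω}) ≤
    ENNReal.ofReal K * ∏ i ∈ s, P {ω | x i < X i ω}

theorem measurable_measure_lt {Ω : Type*} [MeasurableSpace Ω] (P : Measure Ω) (Y : Ω → ℝ) :
    Measurable fun t : ℝ => P {ω | t < Y ω} :=
  Antitone.measurable fun _ _ hab => measure_mono fun _ hω => lt_of_le_of_lt hab hω

theorem UpperEND.lintegral_prod_exp_min_le {Ω : Type*} [MeasurableSpace Ω] {P : Measure Ω}
    [IsProbabilityMeasure P] {K : ℝ} {X : ℕ → Ω → ℝ} (hX : ∀ i, Measurable (X i))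
    (h : UpperEND P K X) {l : ℝ} (hl : 0 < l) (b : ℝ) (s : Finset ℕ) :
    ∫⁻ ω, ∏ i ∈ s, ENNReal.ofReal (Real.exp (l * min (X i ω) b)) ∂P ≤
      ENNReal.ofReal K * ∏ i ∈ s, ∫⁻ ω, ENNReal.ofReal (Real.exp (l * min (X i ω) b)) ∂P := by
  have hY : ∀ i, Measurable fun ω => Real.exp (l * min (X i ω) b) := fun i => by fun_prop
  have h1 := lintegral_prod_ofReal_le hY
    (fun i => measurable_measure_lt P fun ω => Real.exp (l * min (X i ω) b)) s P
    (ENNReal.ofReal K) ?_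
  · refine h1.trans_eq ?_
    congr 1
    refine Finset.prod_congr rfl fun i _ => ?_
    exact (lintegral_eq_lintegral_meas_lt P (ae_of_all _ fun ω => (Real.exp_pos _).le)
      (hY i).aemeasurable).symm
  · intro t ht
    have e : ∀ i, {ω | t i < Real.exp (l * min (X i ω) b)} =
        {ω | Real.log (t i) / l < X i ω ∧ Real.log (t i) / l < b} := fun i => by
      ext ω
      simp only [Set.mem_ofPred_eq]
      rw [← Real.log_lt_iff_lt_exp (ht i), ← lt_min_iff, div_lt_iff₀' hl]
    simp only [e]
    by_cases hb : ∀ i ∈ s, Real.log (t i) / l < b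
    · have e2 : ∀ i ∈ s, {ω | Real.log (t i) / l < X i ω ∧ Real.log (t i) / l < b} =
          {ω | Real.log (t i) / l < X i ω} := fun i hi => by simp [hb i hi]
      rw [Set.iInter₂_congr e2, Finset.prod_congr rfl fun i hi => by rw [e2 i hi]]
      exact h s fun i => Real.log (t i) / l
    · push Not at hb
      obtain ⟨i, hi, hib⟩ := hb
      have : (⋂ i ∈ s, {ω | Real.log (t i) / l < X i ω ∧ Real.log (t i) / l < b}) = ∅ := by
        refine Set.eq_empty_of_forall_notMem fun ω hω => ?_
        simp only [Set.mem_iInter] at hω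
        exact (hω i hi).2.not_ge hib
      simp [this]

theorem lintegral_exp_min_le {Ω : Type*} [MeasurableSpace Ω] {P : Measure Ω}
    [IsProbabilityMeasure P] {X : Ω → ℝ} (hX : MemLp X 2 P) (h0 : ∫ ω, X ω ∂P = 0)
    {l b v : ℝ} (hl : 0 < l) (hb : 0 ≤ b) (hlb : l * b ≤ 1)
    (hv : (∫ ω, X ω ^ 2 ∂P) * (1 + l * b) ≤ v) :
    ∫⁻ ω, ENNReal.ofReal (Real.exp (l * min (X ω) b)) ∂P ≤
      ENNReal.ofReal (Real.exp (l ^ 2 * v / 2)) := by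
  have hXi : Integrable X P := hX.integrable one_le_two
  have hX2 : Integrable (fun ω => X ω ^ 2) P := hX.integrable_sq
  have hpt : ∀ ω, Real.exp (l * min (X ω) b) ≤
      1 + l * X ω + l ^ 2 * (1 + l * b) / 2 * X ω ^ 2 := by
    intro ω
    have hlb0 : 0 ≤ l * b := by positivity
    have h1 := Real.exp_le_quadratic_of_le
      (mul_le_mul_of_nonneg_left (min_le_right (X ω) b) hl.le) hlb0 hlb
    have h2 : l * min (X ω) b ≤ l * X ω := mul_le_mul_of_nonneg_left (min_le_left _ _) hl.le
    have h3 : min (X ω) b ^ 2 ≤ X ω ^ 2 := by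
      rcases le_total (X ω) b with h | h
      · rw [min_eq_left h]
      · rw [min_eq_right h]; exact pow_le_pow_left₀ hb h 2
    have h4 : (l * min (X ω) b) ^ 2 / 2 * (1 + l * b) ≤
        l ^ 2 * (1 + l * b) / 2 * X ω ^ 2 := by
      calc (l * min (X ω) b) ^ 2 / 2 * (1 + l * b)
          = l ^ 2 * (1 + l * b) / 2 * min (X ω) b ^ 2 := by ring
        _ ≤ _ := mul_le_mul_of_nonneg_left h3 (by positivity)
    linarith
  have hlin : Integrable (fun ω => 1 + l * X ω) P := (integrable_const _).add (hXi.const_mul l)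
  have hquad : Integrable (fun ω => 1 + l * X ω + l ^ 2 * (1 + l * b) / 2 * X ω ^ 2) P :=
    hlin.add (hX2.const_mul _)
  calc ∫⁻ ω, ENNReal.ofReal (Real.exp (l * min (X ω) b)) ∂P
      ≤ ∫⁻ ω, ENNReal.ofReal (1 + l * X ω + l ^ 2 * (1 + l * b) / 2 * X ω ^ 2) ∂P :=
        lintegral_mono fun ω => ENNReal.ofReal_le_ofReal (hpt ω)
    _ = ENNReal.ofReal (∫ ω, (1 + l * X ω + l ^ 2 * (1 + l * b) / 2 * X ω ^ 2) ∂P) :=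
        (ofReal_integral_eq_lintegral_ofReal hquad
          (ae_of_all _ fun ω => (Real.exp_pos _).le.trans (hpt ω))).symm
    _ ≤ _ := by
        refine ENNReal.ofReal_le_ofReal ?_
        rw [integral_add hlin (hX2.const_mul _),
          integral_add (integrable_const _) (hXi.const_mul l), integral_const_mul,
          integral_const_mul, h0]
        simp only [integral_const, probReal_univ, smul_eq_mul, mul_one, mul_zero, add_zero]
        have := Real.add_one_le_exp (l ^ 2 * v / 2)
        nlinarith [mul_le_mul_of_nonneg_left hv (sq_nonneg l)]

/-- Chernoff bound for sums of variables truncated from above. -/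
theorem UpperEND.measure_sum_min_ge_le {Ω : Type*} [MeasurableSpace Ω] {P : Measure Ω}
    [IsProbabilityMeasure P] {K : ℝ} (hK : 0 ≤ K) {X : ℕ → Ω → ℝ} (hX : ∀ i, Measurable (X i))
    (h : UpperEND P K X) (hid : ∀ i, ProbabilityTheory.IdentDistrib (X i) (X 0) P P)
    (h2 : MemLp (X 0) 2 P) (h0 : ∫ ω, X 0 ω ∂P = 0)
    {l b v : ℝ} (hl : 0 < l) (hb : 0 ≤ b) (hlb : l * b ≤ 1)
    (hv : (∫ ω, X 0 ω ^ 2 ∂P) * (1 + l * b) ≤ v) (s : Finset ℕ) (t : ℝ) :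
    P {ω | t ≤ ∑ i ∈ s, min (X i ω) b} ≤
      ENNReal.ofReal (K * Real.exp (s.card * (l ^ 2 * v / 2) - l * t)) := by
  have hmgf : ∀ i, ∫⁻ ω, ENNReal.ofReal (Real.exp (l * min (X i ω) b)) ∂P ≤
      ENNReal.ofReal (Real.exp (l ^ 2 * v / 2)) := fun i => by
    refine lintegral_exp_min_le ((hid i).memLp_iff.2 h2) ((hid i).integral_eq.trans h0) hl hb hlb ?_
    have := ((hid i).comp (measurable_id.pow_const 2)).integral_eq
    simp only [Function.comp_def, id] at this
    rwa [this]
  have hprod : ∫⁻ ω, ∏ i ∈ s, ENNReal.ofReal (Real.exp (l * min (X i ω) b)) ∂P ≤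
      ENNReal.ofReal (K * Real.exp (s.card * (l ^ 2 * v / 2))) := by
    refine (h.lintegral_prod_exp_min_le hX hl b s).trans ?_
    rw [ENNReal.ofReal_mul hK]
    gcongr
    refine (Finset.prod_le_prod' fun i _ => hmgf i).trans_eq ?_
    rw [Finset.prod_const, ← ENNReal.ofReal_pow (Real.exp_pos _).le, ← Real.exp_nat_mul]
  have hmono : {ω | t ≤ ∑ i ∈ s, min (X i ω) b} ⊆
      {ω | ENNReal.ofReal (Real.exp (l * t)) ≤
        ∏ i ∈ s, ENNReal.ofReal (Real.exp (l * min (X i ω) b))} := by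
    intro ω hω
    simp only [Set.mem_ofPred_eq] at hω ⊢
    rw [← ENNReal.ofReal_prod_of_nonneg fun i _ => (Real.exp_pos _).le, ← Real.exp_sum,
      ← Finset.mul_sum]
    gcongr
  refine (measure_mono hmono).trans ?_
  refine (meas_ge_le_lintegral_div (by fun_prop) (by simp [Real.exp_pos]) (by simp)).trans ?_
  rw [Real.exp_sub, ← mul_div_assoc, ENNReal.ofReal_div_of_pos (Real.exp_pos _)]
  gcongr

theorem ae_eventually_notMem_of_summable {Ω : Type*} [MeasurableSpace Ω] {P : Measure Ω}
    {A : ℕ → Set Ω} {u : ℕ → ℝ} (hu : Summable u)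
    (h : ∀ᶠ k in atTop, P (A k) ≤ ENNReal.ofReal (u k)) :
    ∀ᵐ ω ∂P, ∀ᶠ k in atTop, ω ∉ A k := by
  obtain ⟨k₀, hk₀⟩ := eventually_atTop.1 h
  have h1 : ∑' k, P (A (k + k₀)) ≠ ∞ := by
    refine ne_top_of_le_ne_top ?_ (ENNReal.tsum_le_tsum fun k => hk₀ (k + k₀) (Nat.le_add_left _ _))
    exact ((summable_nat_add_iff k₀).2 hu).tsum_ofReal_ne_top
  filter_upwards [ae_eventually_notMem h1] with ω hω
  obtain ⟨k₁, hk₁⟩ := eventually_atTop.1 hω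
  refine eventually_atTop.2 ⟨k₁ + k₀, fun k hk => ?_⟩
  have := hk₁ (k - k₀) (by omega)
  rwa [Nat.sub_add_cancel (by omega)] at this

theorem measure_biUnion_le_card_mul {Ω ι : Type*} [MeasurableSpace Ω] {P : Measure Ω}
    (s : Finset ι) {A : ι → Set Ω} {x : ℝ} (h : ∀ i ∈ s, P (A i) ≤ ENNReal.ofReal x) :
    P (⋃ i ∈ s, A i) ≤ ENNReal.ofReal (s.card * x) := by
  refine (measure_biUnion_finset_le s A).trans ((Finset.sum_le_card_nsmul s _ _ h).trans_eq ?_)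
  rw [ENNReal.ofReal_mul (Nat.cast_nonneg _), ENNReal.ofReal_natCast, nsmul_eq_mul]

/-- Domination of joint probabilities passes to increasing unions. -/
theorem measure_biInter_iUnion_le {Ω ι : Type*} [MeasurableSpace Ω] {P : Measure Ω}
    (s : Finset ι) {A : ι → ℕ → Set Ω} (hA : ∀ i, Monotone (A i)) {C : ℝ≥0∞}
    (h : ∀ m, P (⋂ i ∈ s, A i m) ≤ C * ∏ i ∈ s, P (A i m)) :
    P (⋂ i ∈ s, ⋃ m, A i m) ≤ C * ∏ i ∈ s, P (⋃ m, A i m) := by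
  have hmono : Monotone fun m => ⋂ i ∈ s, A i m := fun m m' hm =>
    Set.iInter₂_mono fun i _ => hA i hm
  have e : (⋂ i ∈ s, ⋃ m, A i m) ⊆ ⋃ m, ⋂ i ∈ s, A i m := by
    intro ω hω
    simp only [Set.mem_iInter, Set.mem_iUnion] at hω ⊢
    choose! f hf using hω
    exact ⟨s.sup f, fun i hi => hA i (Finset.le_sup hi) (hf i hi)⟩
  refine (measure_mono e).trans ?_
  rw [hmono.measure_iUnion]
  refine iSup_le fun m => (h m).trans ?_
  gcongr with i hi
  exact Set.subset_iUnion (A i) m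

theorem measure_biInter_le_of_range {Ω : Type*} [MeasurableSpace Ω] {P : Measure Ω}
    [IsProbabilityMeasure P] (s : Finset ℕ) {A : ℕ → ℕ → Set Ω} (hA : ∀ i, Monotone (A i))
    {C : ℝ≥0∞} {B : ℕ → Set Ω}
    (h : ∀ n m, P (⋂ i ∈ Finset.range n, A i m) ≤ C * ∏ i ∈ Finset.range n, P (A i m))
    (hs : ∀ i ∈ s, ⋃ m, A i m = B i) (hs' : ∀ i ∉ s, ⋃ m, A i m = Set.univ) :
    P (⋂ i ∈ s, B i) ≤ C * ∏ i ∈ s, P (B i) := by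
  obtain ⟨n, hn⟩ := s.exists_nat_subset_range
  have h1 := measure_biInter_iUnion_le (Finset.range n) hA (h n)
  have e1 : (⋂ i ∈ s, B i) ⊆ ⋂ i ∈ Finset.range n, ⋃ m, A i m := by
    intro ω hω
    simp only [Set.mem_iInter] at hω
    refine Set.mem_iInter₂.2 fun i _ => ?_
    by_cases hi : i ∈ s
    · rw [hs i hi]; exact hω i hi
    · rw [hs' i hi]; trivial
  have e2 : ∏ i ∈ s, P (B i) = ∏ i ∈ Finset.range n, P (⋃ m, A i m) := by
    rw [← Finset.prod_subset hn fun i _ hi => by rw [hs' i hi, measure_univ]]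
    exact Finset.prod_congr rfl fun i hi => by rw [hs i hi]
  rw [e2]
  exact (measure_mono e1).trans h1

theorem ENDProb.upperEND_sub_const {Ω : Type} [MeasurableSpace Ω] {P : Measure Ω}
    [IsProbabilityMeasure P] {K : ℝ} {X : ℕ → Ω → ℝ} (h : ENDProb P K X) (c : ℝ) :
    UpperEND P K fun i ω => X i ω - c := by
  classical
  intro s x
  let y : ℕ → ℕ → ℝ := fun i m => if i ∈ s then x i + c else -m
  refine measure_biInter_le_of_range s (A := fun i m => {ω | y i m < X i ω}) ?_
    (fun n m => (h n fun i => y i m).2) ?_ ?_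
  · intro i m m' hm ω hω
    have hω' : y i m < X i ω := hω
    refine lt_of_le_of_lt ?_ hω'
    simp only [y]
    split_ifs
    · exact le_rfl
    · simpa using hm
  · intro i hi
    simp only [y, hi, if_true, Set.iUnion_const, lt_sub_iff_add_lt]
  · intro i hi
    refine Set.eq_univ_of_forall fun ω => Set.mem_iUnion.2 ?_
    obtain ⟨m, hm⟩ := exists_nat_gt (-X i ω)
    exact ⟨m, by simp only [y, hi, if_false, Set.mem_ofPred_eq]; linarith⟩

theorem ENDProb.upperEND_const_sub {Ω : Type} [MeasurableSpace Ω] {P : Measure Ω}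
    [IsProbabilityMeasure P] {K : ℝ} {X : ℕ → Ω → ℝ} (h : ENDProb P K X) (c : ℝ) :
    UpperEND P K fun i ω => c - X i ω := by
  classical
  intro s x
  let y : ℕ → ℕ → ℝ := fun i m => if i ∈ s then c - x i - 1 / ((m : ℝ) + 1) else m
  refine measure_biInter_le_of_range s (A := fun i m => {ω | X i ω ≤ y i m}) ?_
    (fun n m => (h n fun i => y i m).1) ?_ ?_
  · intro i m m' hm ω hω
    have hω' : X i ω ≤ y i m := hω
    refine le_trans hω' ?_
    simp only [y]
    split_ifs
    · exact sub_le_sub_left (Nat.one_div_le_one_div hm) _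
    · exact_mod_cast hm
  · intro i hi
    ext ω
    simp only [y, hi, if_true, Set.mem_iUnion, Set.mem_ofPred_eq]
    constructor
    · rintro ⟨m, hm⟩
      have := Nat.one_div_pos_of_nat (α := ℝ) (n := m)
      linarith
    · intro hω
      obtain ⟨m, hm⟩ := exists_nat_one_div_lt (show 0 < c - X i ω - x i by linarith)
      exact ⟨m, by linarith⟩
  · intro i hi
    refine Set.eq_univ_of_forall fun ω => Set.mem_iUnion.2 ?_
    obtain ⟨m, hm⟩ := exists_nat_gt (X i ω)
    exact ⟨m, by simp only [y, hi, if_false, Set.mem_ofPred_eq]; exact hm.le⟩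

theorem ENDProb.congr_ae {Ω : Type} [MeasurableSpace Ω] {P : Measure Ω} {K : ℝ}
    {X Y : ℕ → Ω → ℝ} (h : ENDProb P K X) (hXY : ∀ i, X i =ᵐ[P] Y i) : ENDProb P K Y := by
  intro n x
  have h1 : ∀ᵐ ω ∂P, ∀ i, X i ω = Y i ω := ae_all_iff.2 hXY
  have key : ∀ p : ℕ → ℝ → Prop,
      P (⋂ i ∈ Finset.range n, {ω | p i (X i ω)}) ≤
        ENNReal.ofReal K * ∏ i ∈ Finset.range n, P {ω | p i (X i ω)} →
      P (⋂ i ∈ Finset.range n, {ω | p i (Y i ω)}) ≤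
        ENNReal.ofReal K * ∏ i ∈ Finset.range n, P {ω | p i (Y i ω)} := by
    intro p hp
    have e1 : P (⋂ i ∈ Finset.range n, {ω | p i (X i ω)}) =
        P (⋂ i ∈ Finset.range n, {ω | p i (Y i ω)}) := by
      refine measure_congr (eventuallyEq_set.2 ?_)
      filter_upwards [h1] with ω hω
      simp [hω]
    have e2 : ∀ i, P {ω | p i (X i ω)} = P {ω | p i (Y i ω)} := fun i => by
      refine measure_congr (eventuallyEq_set.2 ?_)
      filter_upwards [h1] with ω hω
      simp [hω]
    simpa only [e1, e2] using hp
  exact ⟨key (fun i y => y ≤ x i) (h n x).1, key (fun i y => x i < y) (h n x).2⟩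

/-- Chernoff tails, at scale `exp k`, for the sums of the `k`-th row of an array. -/
def ChernoffTails {Ω : Type*} [MeasurableSpace Ω] (P : Measure Ω) (K v : ℝ)
    (Z : ℕ → ℕ → Ω → ℝ) : Prop :=
  ∀ C : ℝ, ∀ᶠ k : ℕ in atTop, ∀ l : ℝ, 0 < l → l ≤ C * (k / √(Real.exp k)) →
    ∀ (s : Finset ℕ) (t : ℝ), P {ω | t ≤ ∑ i ∈ s, Z k i ω} ≤
      ENNReal.ofReal (K * Real.exp (s.card * (l ^ 2 * v / 2) - l * t))

theorem tendsto_scale_mul_exp {β : ℝ} (hβ : β < 1 / 2) (C : ℝ) :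
    Tendsto (fun k : ℕ => C * (k / √(Real.exp k)) * Real.exp (β * k)) atTop (nhds 0) := by
  have h1 := ((tendsto_rpow_mul_exp_neg_mul_atTop_nhds_zero 1 (1 / 2 - β)
    (by linarith)).comp tendsto_natCast_atTop_atTop).const_mul C
  rw [mul_zero] at h1
  refine h1.congr fun k => ?_
  have e : √(Real.exp (k : ℝ)) = Real.exp (k / 2) := Real.exp_half _ |>.symm
  have e2 : Real.exp (-(1 / 2 - β) * k) = Real.exp (β * k) / Real.exp (k / 2) := by
    rw [← Real.exp_sub]; congr 1; ring
  simp only [Function.comp_apply, Real.rpow_one]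
  rw [e, e2]
  ring

theorem UpperEND.chernoffTails {Ω : Type*} [MeasurableSpace Ω] {P : Measure Ω}
    [IsProbabilityMeasure P] {K : ℝ} (hK : 0 ≤ K) {X : ℕ → Ω → ℝ} (hX : ∀ i, Measurable (X i))
    (h : UpperEND P K X) (hid : ∀ i, ProbabilityTheory.IdentDistrib (X i) (X 0) P P)
    (h2 : MemLp (X 0) 2 P) (h0 : ∫ ω, X 0 ω ∂P = 0) {β v : ℝ} (hβ : β < 1 / 2)
    (hv : ∫ ω, X 0 ω ^ 2 ∂P < v) :
    ChernoffTails P K v fun k i ω => min (X i ω) (Real.exp (β * k)) := by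
  intro C
  have hlim := tendsto_scale_mul_exp hβ C
  have hlim2 := (hlim.const_add 1).const_mul (∫ ω, X 0 ω ^ 2 ∂P)
  rw [add_zero, mul_one] at hlim2
  filter_upwards [hlim.eventually_le_const one_pos, hlim2.eventually_le_const hv]
    with k hk1 hk2 l hl hlC s t
  have hlb : l * Real.exp (β * k) ≤ C * (k / √(Real.exp k)) * Real.exp (β * k) := by gcongr
  refine h.measure_sum_min_ge_le hK hX hid h2 h0 hl (Real.exp_pos _).le (hlb.trans hk1) ?_ s t
  refine le_trans ?_ hk2
  have : 0 ≤ ∫ ω, X 0 ω ^ 2 ∂P := integral_nonneg fun ω => sq_nonneg _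
  gcongr

theorem ChernoffTails.ae_eventually_sum_lt {Ω : Type*} [MeasurableSpace Ω] {P : Measure Ω}
    {K v : ℝ} (hK : 0 ≤ K) {Z : ℕ → ℕ → Ω → ℝ} (h : ChernoffTails P K v Z) (F : ℕ → Finset ℕ)
    (I : ℕ → ℕ → Finset ℕ) (t l : ℕ → ℕ → ℝ) (C : ℝ) {u e : ℕ → ℝ} (hu : Summable u)
    (hl : ∀ᶠ k : ℕ in atTop, ∀ q ∈ F k, 0 < l k q ∧ l k q ≤ C * (k / √(Real.exp k)) ∧
      (I k q).card * (l k q ^ 2 * v / 2) - l k q * t k q ≤ -e k)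
    (hcard : ∀ᶠ k : ℕ in atTop, (F k).card * (K * Real.exp (-e k)) ≤ u k) :
    ∀ᵐ ω ∂P, ∀ᶠ k : ℕ in atTop, ∀ q ∈ F k, ∑ i ∈ I k q, Z k i ω < t k q := by
  have h1 := ae_eventually_notMem_of_summable (P := P)
    (A := fun k => ⋃ q ∈ F k, {ω | t k q ≤ ∑ i ∈ I k q, Z k i ω}) hu ?_
  · filter_upwards [h1] with ω hω
    filter_upwards [hω] with k hk q hq
    by_contra hcon
    exact hk (Set.mem_biUnion hq (not_lt.1 hcon))
  · filter_upwards [h C, hl, hcard] with k hk hlk hck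
    refine (measure_biUnion_le_card_mul (F k) (x := K * Real.exp (-e k)) fun q hq => ?_).trans
      (ENNReal.ofReal_le_ofReal hck)
    obtain ⟨h1, h2, h3⟩ := hlk q hq
    refine (hk _ h1 h2 (I k q) (t k q)).trans (ENNReal.ofReal_le_ofReal ?_)
    gcongr

/-- The step of the grid used at scale `exp k` with about `r` points per unit of scale. -/
def mesh (k : ℕ) (r : ℝ) : ℕ := ⌊Real.exp k / r⌋₊ + 1

theorem mesh_pos (k : ℕ) (r : ℝ) : 0 < mesh k r := Nat.succ_pos _

theorem exp_div_lt_mesh (k : ℕ) (r : ℝ) : Real.exp k / r < mesh k r := by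
  simpa [mesh] using Nat.lt_floor_add_one (Real.exp k / r)

theorem card_Ico_mesh_le (k n : ℕ) {r : ℝ} (hr : 0 ≤ r) :
    ((Finset.Ico (mesh k r * (n / mesh k r)) n).card : ℝ) ≤ Real.exp k / r := by
  have h1 : (Finset.Ico (mesh k r * (n / mesh k r)) n).card ≤ ⌊Real.exp k / r⌋₊ := by
    rw [Nat.card_Ico, ← Nat.mod_eq_sub_mul_div]
    exact Nat.lt_succ_iff.1 (Nat.mod_lt n (mesh_pos k r))
  exact (Nat.cast_le.2 h1).trans (Nat.floor_le (by positivity))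

theorem div_mesh_lt {k n : ℕ} {r : ℕ} (hr : 0 < r) (hn : (n : ℝ) < Real.exp (k + 1)) :
    n / mesh k r < 3 * r := by
  have hr' : (0 : ℝ) < r := by exact_mod_cast hr
  have h1 := exp_div_lt_mesh k r
  rw [div_lt_iff₀ hr'] at h1
  have h2 : mesh k r * (n / mesh k r) ≤ n := Nat.mul_div_le n _
  have h3 : (mesh k r : ℝ) * (n / mesh k r : ℕ) ≤ n := by exact_mod_cast h2
  by_contra! hcon
  have h4 : (3 * r : ℝ) ≤ (n / mesh k r : ℕ) := by exact_mod_cast hcon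
  have h5 : (mesh k r : ℝ) * (3 * r) ≤ (mesh k r : ℝ) * (n / mesh k r : ℕ) := by gcongr
  rw [Real.exp_add] at hn
  have h6 : Real.exp 1 < 3 := Real.exp_one_lt_three
  nlinarith [Real.exp_pos (k : ℝ)]

theorem one_le_log_natCast {k : ℕ} (hk : 3 ≤ k) : 1 ≤ Real.log k := by
  rw [Real.le_log_iff_exp_le (by positivity)]
  exact Real.exp_one_lt_three.le.trans (by exact_mod_cast hk)

theorem log_natCast_le_sq {k : ℕ} (hk : 3 ≤ k) : Real.log k ≤ (k : ℝ) ^ 2 := by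
  have h3 : (3 : ℝ) ≤ k := by exact_mod_cast hk
  have := Real.log_le_sub_one_of_pos (show (0 : ℝ) < k by linarith)
  nlinarith

theorem natCeil_exp_succ_le (k : ℕ) : (⌈Real.exp (k + 1)⌉₊ : ℝ) ≤ 4 * Real.exp k := by
  have h1 := Nat.ceil_lt_add_one (Real.exp_pos ((k : ℝ) + 1)).le
  rw [Real.exp_add] at h1 ⊢
  have h2 : Real.exp 1 < 3 := Real.exp_one_lt_three
  have h3 : 1 ≤ Real.exp (k : ℝ) := Real.one_le_exp (Nat.cast_nonneg k)
  nlinarith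

theorem exp_neg_mul_log_natCast {k : ℕ} (hk : 0 < k) (a : ℝ) :
    Real.exp (-(a * Real.log k)) = (k : ℝ) ^ (-a) := by
  rw [Real.rpow_def_of_pos (by exact_mod_cast hk)]
  congr 1
  ring

theorem ChernoffTails.ae_eventually_coarse {Ω : Type*} [MeasurableSpace Ω] {P : Measure Ω}
    {K v w : ℝ} (hK : 0 ≤ K) {Z : ℕ → ℕ → Ω → ℝ} (h : ChernoffTails P K v Z) (hv : 0 < v)
    (hvw : v < w) {R : ℕ} (hR : 0 < R) :
    ∀ᵐ ω ∂P, ∀ᶠ k : ℕ in atTop, ∀ q ∈ Finset.range (3 * R),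
      ∑ i ∈ Finset.range (mesh k R * (q + 1)), Z k i ω <
        √(2 * w * Real.log k * (mesh k R * (q + 1) : ℕ)) := by
  have hw : 0 < w := hv.trans hvw
  have hR' : (0 : ℝ) < R := by exact_mod_cast hR
  refine h.ae_eventually_sum_lt hK (fun _ => Finset.range (3 * R))
    (fun k q => Finset.range (mesh k R * (q + 1))) _
    (fun k q => √(2 * w * Real.log k / (mesh k R * (q + 1) : ℕ)) / v)
    (√(2 * w * R) / v) (u := fun k => (3 * R : ℕ) * (K * (k : ℝ) ^ (-(w / v))))
    (e := fun k => w / v * Real.log k) ?_ ?_ ?_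
  · refine Summable.mul_left _ (Summable.mul_left _ (Real.summable_nat_rpow.2 ?_))
    rw [neg_lt_neg_iff, lt_div_iff₀ hv]
    linarith
  · filter_upwards [eventually_ge_atTop 3] with k hk q _
    have hL := one_le_log_natCast hk
    have hL2 := log_natCast_le_sq hk
    have hj : Real.exp k / R ≤ (mesh k R * (q + 1) : ℕ) := by
      refine (exp_div_lt_mesh k R).le.trans ?_
      exact_mod_cast Nat.le_mul_of_pos_right _ (Nat.succ_pos q)
    have hj0 : (0 : ℝ) < (mesh k R * (q + 1) : ℕ) :=
      lt_of_lt_of_le (by positivity) hj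
    rw [Finset.card_range]
    generalize ((mesh k R * (q + 1) : ℕ) : ℝ) = j at hj hj0 ⊢
    have hA : 0 < 2 * w * Real.log k := by positivity
    have hE : 0 < Real.exp (k : ℝ) := Real.exp_pos _
    refine ⟨by positivity, ?_, le_of_eq ?_⟩
    · rw [div_mul_eq_mul_div]
      gcongr
      have e : √(2 * w * R) * (k / √(Real.exp k)) = √(2 * w * R * (k ^ 2 / Real.exp k)) := by
        rw [Real.sqrt_mul (show 0 ≤ 2 * w * R by positivity), Real.sqrt_div (by positivity),
          Real.sqrt_sq (by positivity)]
      rw [e]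
      refine Real.sqrt_le_sqrt ?_
      rw [div_le_iff₀ hj0]
      calc 2 * w * Real.log k ≤ 2 * w * (k : ℝ) ^ 2 := by gcongr
        _ = 2 * w * R * (k ^ 2 / Real.exp k) * (Real.exp k / R) := by field_simp
        _ ≤ _ := by gcongr
    · have e : √(2 * w * Real.log k / j) * √(2 * w * Real.log k * j) = 2 * w * Real.log k := by
        rw [← Real.sqrt_mul (by positivity), show 2 * w * Real.log k / j * (2 * w * Real.log k * j)
          = (2 * w * Real.log k) ^ 2 by field_simp, Real.sqrt_sq hA.le]
      rw [div_mul_eq_mul_div, e, div_pow, Real.sq_sqrt (by positivity)]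
      field_simp
      ring
  · filter_upwards [eventually_gt_atTop 0] with k hk
    rw [exp_neg_mul_log_natCast hk, Finset.card_range]

theorem ChernoffTails.ae_eventually_medium {Ω : Type*} [MeasurableSpace Ω] {P : Measure Ω}
    {K v ε : ℝ} (hK : 0 ≤ K) {Z : ℕ → ℕ → Ω → ℝ} (h : ChernoffTails P K v Z) (hv : 0 < v)
    (hε : 0 < ε) {R : ℕ} (hR : 0 < R) (hRv : (5 / ε) ^ 2 * v / 2 ≤ R) :
    ∀ᵐ ω ∂P, ∀ᶠ k : ℕ in atTop, ∀ q ∈ Finset.range (3 * k ^ 2),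
      ∑ i ∈ Finset.Ico (mesh k R * (mesh k (k ^ 2 : ℕ) * q / mesh k R)) (mesh k (k ^ 2 : ℕ) * q),
        Z k i ω < ε * √(Real.exp k * Real.log k) := by
  have hR' : (0 : ℝ) < R := by exact_mod_cast hR
  refine h.ae_eventually_sum_lt hK (fun k => Finset.range (3 * k ^ 2))
    (fun k q => Finset.Ico (mesh k R * (mesh k (k ^ 2 : ℕ) * q / mesh k R))
      (mesh k (k ^ 2 : ℕ) * q)) _
    (fun k _ => 5 / ε * (√(Real.log k) / √(Real.exp k)))
    (5 / ε) (u := fun k => 3 * K * (k : ℝ) ^ (-2 : ℝ))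
    (e := fun k => 4 * Real.log k) ?_ ?_ ?_
  · exact Summable.mul_left _ (Real.summable_nat_rpow.2 (by norm_num))
  · filter_upwards [eventually_ge_atTop 3] with k hk q _
    have hL := one_le_log_natCast hk
    have hL2 := log_natCast_le_sq hk
    have hc := card_Ico_mesh_le k (mesh k (k ^ 2 : ℕ) * q) hR'.le
    generalize ((Finset.Ico (mesh k R * (mesh k (k ^ 2 : ℕ) * q / mesh k R))
      (mesh k (k ^ 2 : ℕ) * q)).card : ℝ) = j at hc ⊢
    have hE : 0 < √(Real.exp (k : ℝ)) := Real.sqrt_pos.2 (Real.exp_pos _)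
    have hl : 0 < √(Real.log k) := Real.sqrt_pos.2 (by linarith)
    refine ⟨by positivity, ?_, ?_⟩
    · gcongr
      exact Real.sqrt_le_iff.2 ⟨by positivity, hL2⟩
    · have e1 : 5 / ε * (√(Real.log k) / √(Real.exp k)) * (ε * √(Real.exp k * Real.log k)) =
          5 * Real.log k := by
        rw [Real.sqrt_mul (Real.exp_pos _).le]
        field_simp
        rw [Real.sq_sqrt (by linarith)]
      have e2 : j * ((5 / ε * (√(Real.log k) / √(Real.exp k))) ^ 2 * v / 2) =
          j / Real.exp k * ((5 / ε) ^ 2 * v / 2) * Real.log k := by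
        rw [mul_pow, div_pow (√_), Real.sq_sqrt (by linarith), Real.sq_sqrt (Real.exp_pos _).le]
        ring
      have h3 : j / Real.exp k * ((5 / ε) ^ 2 * v / 2) ≤ 1 := by
        calc _ ≤ (Real.exp k / R) / Real.exp k * R := by gcongr
          _ = 1 := by field_simp
      rw [e1, e2]
      nlinarith
  · filter_upwards [eventually_gt_atTop 0] with k hk
    have hk' : (0 : ℝ) < k := by exact_mod_cast hk
    rw [exp_neg_mul_log_natCast hk, Finset.card_range]
    have : (k : ℝ) ^ (-2 : ℝ) = (k : ℝ) ^ 2 * (k : ℝ) ^ (-4 : ℝ) := by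
      rw [← Real.rpow_natCast, ← Real.rpow_add hk']; norm_num
    rw [this]
    push_cast
    exact le_of_eq (by ring)

theorem ChernoffTails.ae_eventually_fine {Ω : Type*} [MeasurableSpace Ω] {P : Measure Ω}
    {K v ε : ℝ} (hK : 0 ≤ K) {Z : ℕ → ℕ → Ω → ℝ} (h : ChernoffTails P K v Z) (hv : 0 < v)
    (hε : 0 < ε) :
    ∀ᵐ ω ∂P, ∀ᶠ k : ℕ in atTop, ∀ n ∈ Finset.range ⌈Real.exp (k + 1)⌉₊,
      ∑ i ∈ Finset.Ico (mesh k (k ^ 2 : ℕ) * (n / mesh k (k ^ 2 : ℕ))) n, Z k i ω <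
        ε * √(Real.exp k * Real.log k) := by
  refine h.ae_eventually_sum_lt hK (fun k => Finset.range ⌈Real.exp (k + 1)⌉₊)
    (fun k n => Finset.Ico (mesh k (k ^ 2 : ℕ) * (n / mesh k (k ^ 2 : ℕ))) n) _
    (fun k _ => 5 / ε * (k / √(Real.exp k)))
    (5 / ε) (u := fun k => 4 * (K * Real.exp ((5 / ε) ^ 2 * v / 2)) * Real.exp (-k))
    (e := fun k => 2 * k - (5 / ε) ^ 2 * v / 2) ?_ ?_ ?_
  · exact Summable.mul_left _ Real.summable_exp_neg_nat
  · filter_upwards [eventually_ge_atTop 3] with k hk n _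
    have hL := one_le_log_natCast hk
    have hc := card_Ico_mesh_le k n (r := (k ^ 2 : ℕ)) (by positivity)
    generalize ((Finset.Ico (mesh k (k ^ 2 : ℕ) * (n / mesh k (k ^ 2 : ℕ))) n).card : ℝ) = j
      at hc ⊢
    have hE : 0 < √(Real.exp (k : ℝ)) := Real.sqrt_pos.2 (Real.exp_pos _)
    have hk0 : (0 : ℝ) < k := by
      have : 0 < k := by omega
      exact_mod_cast this
    refine ⟨by positivity, le_rfl, ?_⟩
    have e1 : 5 / ε * (k / √(Real.exp k)) * (ε * √(Real.exp k * Real.log k)) =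
        5 * k * √(Real.log k) := by
      rw [Real.sqrt_mul (Real.exp_pos _).le]
      field_simp
    have h1 : 1 ≤ √(Real.log k) := Real.one_le_sqrt.2 hL
    have h2 : j * ((5 / ε * (k / √(Real.exp k))) ^ 2 * v / 2) ≤ (5 / ε) ^ 2 * v / 2 := by
      rw [mul_pow, div_pow (k : ℝ), Real.sq_sqrt (Real.exp_pos _).le]
      calc _ ≤ Real.exp k / (k ^ 2 : ℕ) * ((5 / ε) ^ 2 * (k ^ 2 / Real.exp k) * v / 2) := by gcongr
        _ = _ := by push_cast; field_simp
    rw [e1]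
    nlinarith
  · filter_upwards with k
    rw [Finset.card_range]
    have e1 : Real.exp (-(2 * k - (5 / ε) ^ 2 * v / 2)) =
        Real.exp ((5 / ε) ^ 2 * v / 2) * Real.exp (-k) / Real.exp k := by
      rw [← Real.exp_add, ← Real.exp_sub]; congr 1; ring
    rw [e1]
    calc _ ≤ 4 * Real.exp k * (K * (Real.exp ((5 / ε) ^ 2 * v / 2) * Real.exp (-k) / Real.exp k)) :=
          mul_le_mul_of_nonneg_right (natCeil_exp_succ_le k) (by positivity)
      _ = _ := by field_simp

theorem ae_eventually_forall_le_exp {Ω : Type*} [MeasurableSpace Ω] {P : Measure Ω}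
    {X : ℕ → Ω → ℝ} (hid : ∀ i, ProbabilityTheory.IdentDistrib (X i) (X 0) P P) {p β : ℝ}
    (hp : 0 < p) (hβ : 1 < β * p) (hmom : Integrable (fun ω => |X 0 ω| ^ p) P) :
    ∀ᵐ ω ∂P, ∀ᶠ k : ℕ in atTop, ∀ i ∈ Finset.range ⌈Real.exp (k + 1)⌉₊,
      X i ω ≤ Real.exp (β * k) := by
  set M := ∫ ω, |X 0 ω| ^ p ∂P
  have hM : 0 ≤ M := integral_nonneg fun ω => by positivity
  have h1 := ae_eventually_notMem_of_summable (P := P)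
    (A := fun k : ℕ => ⋃ i ∈ Finset.range ⌈Real.exp (k + 1)⌉₊, {ω | Real.exp (β * k) < X i ω})
    (u := fun k : ℕ => 4 * M * Real.exp (-(β * p - 1) * k)) ?_ ?_
  · filter_upwards [h1] with ω hω
    filter_upwards [hω] with k hk i hi
    by_contra hcon
    exact hk (Set.mem_biUnion hi (not_le.1 hcon))
  · refine Summable.mul_left _ ?_
    have := Real.summable_exp_nat_mul_iff (a := -(β * p - 1))
    simp_rw [mul_comm _ ((_ : ℕ) : ℝ)]
    exact this.2 (by linarith)
  · refine Eventually.of_forall fun k => ?_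
    have hone : ∀ i, P {ω | Real.exp (β * k) < X i ω} ≤
        ENNReal.ofReal (M / Real.exp (β * p * k)) := by
      intro i
      have e : P {ω | Real.exp (β * k) < X i ω} = P {ω | Real.exp (β * k) < X 0 ω} :=
        (hid i).measure_mem_eq measurableSet_Ioi
      rw [e, ENNReal.ofReal_div_of_pos (Real.exp_pos _),
        ofReal_integral_eq_lintegral_ofReal hmom (ae_of_all _ fun ω => by positivity)]
      refine le_trans (measure_mono ?_) (meas_ge_le_lintegral_div
        hmom.aestronglyMeasurable.aemeasurable.ennreal_ofReal (by simp [Real.exp_pos]) (by simp))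
      intro ω hω
      have hω' : Real.exp (β * k) < X 0 ω := hω
      refine ENNReal.ofReal_le_ofReal ?_
      calc Real.exp (β * p * k) = Real.exp (β * k) ^ p := by
            rw [← Real.exp_mul]; congr 1; ring
        _ ≤ |X 0 ω| ^ p := by
            gcongr
            exact hω'.le.trans (le_abs_self _)
    refine (measure_biUnion_le_card_mul _ fun i _ => hone i).trans (ENNReal.ofReal_le_ofReal ?_)
    rw [Finset.card_range]
    refine (mul_le_mul_of_nonneg_right (natCeil_exp_succ_le k) (by positivity)).trans_eq ?_
    have : Real.exp (-(β * p - 1) * k) = Real.exp k / Real.exp (β * p * k) := by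
      rw [← Real.exp_sub]; congr 1; ring
    rw [this]
    ring

theorem le_paperLog {x : ℝ} (hx : 0 < x) : Real.log x ≤ paperLog x :=
  Real.log_le_log hx (le_max_left _ _)

theorem lilA_nonneg (n : ℕ) : 0 ≤ lilA n := Real.sqrt_nonneg _

theorem UpperEND.ae_eventually_sum_le {Ω : Type*} [MeasurableSpace Ω] {P : Measure Ω}
    [IsProbabilityMeasure P] {K : ℝ} (hK : 0 ≤ K) {X : ℕ → Ω → ℝ} (hX : ∀ i, Measurable (X i))
    (h : UpperEND P K X) (hid : ∀ i, ProbabilityTheory.IdentDistrib (X i) (X 0) P P)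
    (h2 : MemLp (X 0) 2 P) (h0 : ∫ ω, X 0 ω ∂P = 0) {γ : ℝ} (hγ : 0 < γ)
    (hmom : Integrable (fun ω => |X 0 ω| ^ (2 + γ)) P) {c : ℝ}
    (hc : √(∫ ω, X 0 ω ^ 2 ∂P) < c) :
    ∀ᵐ ω ∂P, ∀ᶠ n : ℕ in atTop, ∑ i ∈ Finset.range n, X i ω ≤ c * lilA n := by
  set σ := √(∫ ω, X 0 ω ^ 2 ∂P) with hσ
  have hσ0 : 0 ≤ σ := Real.sqrt_nonneg _
  have hσ2 : ∫ ω, X 0 ω ^ 2 ∂P = σ ^ 2 :=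
    (Real.sq_sqrt (integral_nonneg fun ω => sq_nonneg _)).symm
  set d := (c - σ) / 4 with hd
  have hd0 : 0 < d := by rw [hd]; linarith
  obtain ⟨R₀, hR₀⟩ := exists_nat_ge ((5 / d) ^ 2 * (σ + d) ^ 2 / 2)
  set R := R₀ + 1 with hR
  have hRv : (5 / d) ^ 2 * (σ + d) ^ 2 / 2 ≤ R := by
    rw [hR]; push_cast; linarith
  set β := (1 + γ / 4) / (2 + γ) with hβ
  have hβ2 : β < 1 / 2 := by rw [hβ, div_lt_iff₀ (by positivity)]; linarith
  have hβp : 1 < β * (2 + γ) := by rw [hβ, div_mul_cancel₀ _ (by positivity)]; linarith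
  have hv : 0 < (σ + d) ^ 2 := by positivity
  have hT := h.chernoffTails hK hX hid h2 h0 hβ2 (v := (σ + d) ^ 2) (by rw [hσ2]; nlinarith)
  filter_upwards [hT.ae_eventually_coarse hK hv (w := (σ + 2 * d) ^ 2) (by nlinarith) R₀.succ_pos,
    hT.ae_eventually_medium hK hv hd0 R₀.succ_pos hRv, hT.ae_eventually_fine hK hv hd0,
    ae_eventually_forall_le_exp hid (by positivity) hβp hmom] with ω hω0 hω1 hω2 hω3
  have hlog : Tendsto (fun n : ℕ => ⌊Real.log n⌋₊) atTop atTop :=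
    tendsto_nat_floor_atTop.comp (Real.tendsto_log_atTop.comp tendsto_natCast_atTop_atTop)
  filter_upwards [hlog.eventually hω0, hlog.eventually hω1, hlog.eventually hω2,
    hlog.eventually hω3, hlog.eventually (eventually_ge_atTop 3), eventually_gt_atTop 0]
    with n hn0 hn1 hn2 hn3 hk hn
  have hnR : (0 : ℝ) < n := by exact_mod_cast hn
  have hlogn : 0 ≤ Real.log n := Real.log_natCast_nonneg n
  have hkl : (⌊Real.log n⌋₊ : ℝ) ≤ Real.log n := Nat.floor_le hlogn
  have hlk : Real.log n < ⌊Real.log n⌋₊ + 1 := Nat.lt_floor_add_one _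
  generalize ⌊Real.log n⌋₊ = k at hn0 hn1 hn2 hn3 hk hkl hlk
  have hen : Real.exp k ≤ n := (Real.le_log_iff_exp_le hnR).1 hkl
  have hne : (n : ℝ) < Real.exp (k + 1) := (Real.log_lt_iff_lt_exp hnR).1 hlk
  have hnc : n < ⌈Real.exp (k + 1)⌉₊ := Nat.lt_ceil.2 hne
  have hL := one_le_log_natCast hk
  have hk0 : 0 < k := by omega
  have hkR : (0 : ℝ) < k := by exact_mod_cast hk0
  -- the iterated logarithm dominates `log k`
  have hll : Real.log k ≤ paperLog (paperLog n) := by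
    have h1 : (k : ℝ) ≤ paperLog n := hkl.trans (le_paperLog hnR)
    exact (Real.log_le_log hkR h1).trans (le_paperLog (hkR.trans_le h1))
  have hlil : lilA n = √(2 * (n * paperLog (paperLog n))) := by rw [lilA]; congr 1; ring
  set m := mesh k (k ^ 2 : ℕ) * (n / mesh k (k ^ 2 : ℕ)) with hm
  have hmn : m ≤ n := Nat.mul_div_le _ _
  have hmR : (m : ℝ) < Real.exp (k + 1) := lt_of_le_of_lt (by exact_mod_cast hmn) hne
  set j := mesh k R * (m / mesh k R) with hj
  have hjm : j ≤ m := Nat.mul_div_le _ _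
  have hfine := hn2 n (Finset.mem_range.2 hnc)
  have hmed := hn1 (n / mesh k (k ^ 2 : ℕ)) (Finset.mem_range.2 (div_mesh_lt (by positivity) hne))
  have hcoarse : ∑ i ∈ Finset.range j, min (X i ω) (Real.exp (β * k)) ≤
      √(2 * (σ + 2 * d) ^ 2 * Real.log k * j) := by
    rcases Nat.eq_zero_or_pos (m / mesh k R) with hq | hq
    · have : j = 0 := by rw [hj, hq, mul_zero]
      simp [this]
    · have h1 := hn0 (m / mesh k R - 1) (Finset.mem_range.2
        (lt_of_le_of_lt (Nat.sub_le _ _) (div_mesh_lt R₀.succ_pos hmR)))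
      rw [Nat.sub_add_cancel hq] at h1
      exact h1.le
  have hsum : ∑ i ∈ Finset.range n, X i ω =
      ∑ i ∈ Finset.range j, min (X i ω) (Real.exp (β * k)) +
      ∑ i ∈ Finset.Ico j m, min (X i ω) (Real.exp (β * k)) +
      ∑ i ∈ Finset.Ico m n, min (X i ω) (Real.exp (β * k)) := by
    rw [Finset.sum_range_add_sum_Ico _ hjm, Finset.sum_range_add_sum_Ico _ hmn]
    refine Finset.sum_congr rfl fun i hi => (min_eq_left (hn3 i ?_)).symm
    exact Finset.mem_range.2 ((Finset.mem_range.1 hi).trans hnc)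
  have hb1 : √(2 * (σ + 2 * d) ^ 2 * Real.log k * j) ≤ (σ + 2 * d) * lilA n := by
    have : 2 * (σ + 2 * d) ^ 2 * Real.log k * j = (σ + 2 * d) ^ 2 * (2 * (j * Real.log k)) := by
      ring
    rw [this, Real.sqrt_mul (by positivity), Real.sqrt_sq (by positivity), hlil]
    have hjn : (j : ℝ) ≤ n := by exact_mod_cast hjm.trans hmn
    gcongr
  have hb2 : d * √(Real.exp k * Real.log k) ≤ d * lilA n := by
    rw [hlil]
    have h1 : Real.exp k * Real.log k ≤ n * paperLog (paperLog n) := by gcongr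
    have h2 : 0 ≤ Real.exp k * Real.log k := by positivity
    exact mul_le_mul_of_nonneg_left (Real.sqrt_le_sqrt (by linarith)) hd0.le
  have hfinal : (σ + 2 * d) * lilA n + d * lilA n + d * lilA n = c * lilA n := by
    rw [hd]; ring
  rw [hsum, ← hfinal]
  exact add_le_add (add_le_add (hcoarse.trans hb1) (hmed.le.trans hb2)) (hfine.le.trans hb2)


/-- Corollary 5.3: law of the iterated logarithm for extended negatively
dependent, identically distributed random variables on a probability space. -/
theorem stmt19 {Ω : Type} [MeasurableSpace Ω] (P : Measure Ω)
    [IsProbabilityMeasure P] (X : ℕ → Ω → ℝ)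
    (K : ℝ) (hK : 1 ≤ K)
    (hid : ∀ i, ProbabilityTheory.IdentDistrib (X i) (X 0) P P)
    (hEND : ENDProb P K X)
    (γ : ℝ) (hγ : 0 < γ)
    (hmom : Integrable (fun ω => |X 0 ω| ^ (2 + γ)) P) :
    P {ω | limsup (fun n : ℕ =>
        ((|(∑ k ∈ Finset.range n, X k ω) - n * ∫ ω', X 0 ω' ∂P| /
            lilA n : ℝ) : EReal)) atTop ≤
      ((Real.sqrt (ProbabilityTheory.variance (X 0) P) : ℝ) : EReal)} = 1 := by
  have hK0 : 0 ≤ K := zero_le_one.trans hK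
  set μ := ∫ ω', X 0 ω' ∂P with hμ
  set Y : ℕ → Ω → ℝ := fun i => (hid i).aemeasurable_fst.mk (X i) with hY
  have hYm : ∀ i, Measurable (Y i) := fun i => (hid i).aemeasurable_fst.measurable_mk
  have hXY : ∀ i, X i =ᵐ[P] Y i := fun i => (hid i).aemeasurable_fst.ae_eq_mk
  have hYid : ∀ i, ProbabilityTheory.IdentDistrib (Y i) (Y 0) P P := fun i =>
    ((ProbabilityTheory.IdentDistrib.of_ae_eq (hid i).aemeasurable_fst (hXY i)).symm.trans
      (hid i)).trans (ProbabilityTheory.IdentDistrib.of_ae_eq (hid 0).aemeasurable_fst (hXY 0))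
  have hYEND : ENDProb P K Y := hEND.congr_ae hXY
  set p : ℝ≥0∞ := ENNReal.ofReal (2 + γ) with hp
  have hp0 : p ≠ 0 := by simp [hp]; linarith
  have hptop : p ≠ ∞ := ENNReal.ofReal_ne_top
  have hpr : p.toReal = 2 + γ := ENNReal.toReal_ofReal (by positivity)
  have h2p : 2 ≤ p := by
    rw [hp, ← ENNReal.ofReal_ofNat 2]
    exact ENNReal.ofReal_le_ofReal (by linarith)
  have hXp : MemLp (X 0) p P := by
    rw [← integrable_norm_rpow_iff (hid 0).aemeasurable_fst.aestronglyMeasurable hp0 hptop, hpr]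
    exact hmom
  have hYp : MemLp (Y 0) p P := (memLp_congr_ae (hXY 0)).1 hXp
  have hYi : Integrable (Y 0) P := hYp.integrable (one_le_two.trans h2p)
  have hYμ : ∫ ω, Y 0 ω ∂P = μ := (integral_congr_ae (hXY 0)).symm
  have hvar : ProbabilityTheory.variance (X 0) P = ∫ ω, (Y 0 ω - μ) ^ 2 ∂P := by
    rw [ProbabilityTheory.variance_eq_integral (hid 0).aemeasurable_fst]
    refine integral_congr_ae ?_
    filter_upwards [hXY 0] with ω hω
    rw [hω]
  have hmoment : ∀ {U : Ω → ℝ}, MemLp U p P → Integrable (fun ω => |U ω| ^ (2 + γ)) P := by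
    intro U hU
    have := hU.integrable_norm_rpow hp0 hptop
    rwa [hpr] at this
  have hUp : MemLp (fun ω => Y 0 ω - μ) p P := hYp.sub (memLp_const μ)
  have hVp : MemLp (fun ω => μ - Y 0 ω) p P := (memLp_const μ).sub hYp
  have hupper : ∀ c, √(ProbabilityTheory.variance (X 0) P) < c →
      ∀ᵐ ω ∂P, ∀ᶠ n : ℕ in atTop, ∑ i ∈ Finset.range n, (Y i ω - μ) ≤ c * lilA n := by
    intro c hc
    refine (hYEND.upperEND_sub_const μ).ae_eventually_sum_le hK0 (fun i => (hYm i).sub_const μ)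
      (fun i => (hYid i).comp (measurable_id.sub_const μ)) (hUp.mono_exponent h2p) ?_ hγ
      (hmoment hUp) (by rwa [← hvar])
    rw [integral_sub hYi (integrable_const _), hYμ]
    simp
  have hlower : ∀ c, √(ProbabilityTheory.variance (X 0) P) < c →
      ∀ᵐ ω ∂P, ∀ᶠ n : ℕ in atTop, ∑ i ∈ Finset.range n, (μ - Y i ω) ≤ c * lilA n := by
    intro c hc
    refine (hYEND.upperEND_const_sub μ).ae_eventually_sum_le hK0 (fun i => (hYm i).const_sub μ)
      (fun i => (hYid i).comp (measurable_id.const_sub μ)) (hVp.mono_exponent h2p) ?_ hγ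
      (hmoment hVp) ?_
    · rw [integral_sub (integrable_const _) hYi, hYμ]
      simp
    · have : ∫ ω, (μ - Y 0 ω) ^ 2 ∂P = ∫ ω, (Y 0 ω - μ) ^ 2 ∂P :=
        integral_congr_ae (ae_of_all _ fun ω => by ring)
      rwa [this, ← hvar]
  have hae : ∀ᵐ ω ∂P, limsup (fun n : ℕ =>
      ((|(∑ k ∈ Finset.range n, X k ω) - n * μ| / lilA n : ℝ) : EReal)) atTop ≤
      ((√(ProbabilityTheory.variance (X 0) P) : ℝ) : EReal) := by
    set σ := √(ProbabilityTheory.variance (X 0) P)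
    have hlt : ∀ m : ℕ, σ < σ + 1 / ((m : ℝ) + 1) := fun m =>
      lt_add_of_pos_right _ Nat.one_div_pos_of_nat
    filter_upwards [ae_all_iff.2 fun m : ℕ => hupper _ (hlt m),
      ae_all_iff.2 fun m : ℕ => hlower _ (hlt m), ae_all_iff.2 hXY] with ω hu hl hω
    have hm : ∀ m : ℕ, limsup (fun n : ℕ =>
        ((|(∑ k ∈ Finset.range n, X k ω) - n * μ| / lilA n : ℝ) : EReal)) atTop ≤
        ((σ + 1 / ((m : ℝ) + 1) : ℝ) : EReal) := by
      intro m
      refine limsup_le_of_le (h := ?_)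
      filter_upwards [hu m, hl m] with n hun hln
      refine EReal.coe_le_coe_iff.2 (div_le_of_le_mul₀ (lilA_nonneg n)
        ((Real.sqrt_nonneg _).trans (hlt m).le) (abs_le.2 ?_))
      simp only [Finset.sum_sub_distrib, Finset.sum_const, Finset.card_range, nsmul_eq_mul]
        at hun hln
      simp only [hω]
      constructor <;> linarith
    refine ge_of_tendsto' (x := atTop)
      (f := fun m : ℕ => ((σ + 1 / ((m : ℝ) + 1) : ℝ) : EReal)) ?_ hm
    refine (continuous_coe_real_ereal.tendsto σ).comp ?_
    simpa using tendsto_one_div_add_atTop_nhds_zero_nat.const_add σ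
  rw [← measure_univ (μ := P)]
  exact measure_congr (eventuallyEq_univ.2 hae)
end
end
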